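/- Let Q̃₂ = {(a,b) ∈ ℝ⁴ × ℝ⁴ : ‖a‖ = 1, ‖b‖ = 1, ⟨a,b⟩ = 0} with the subspace topology. For any base point x₀ ∈ Q̃₂, the homotopy group π₃(Q̃₂, x₀) is isomorphic to ℤ × ℤ. -/

import Mathlib

open scoped Topology RealInnerProductSpace

/-- The Stiefel manifold `Q̃_n` of orthonormal 2-frames in `ℝ^{2n}` (equivalently, unit-norm
isotropic vectors `a + ib` for the complexified standard quadratic form on `ℂ^{2n}`),
with the subspace topology. -/
def QTilde (n : ℕ) : Type :=
  {p : EuclideanSpace ℝ (Fin (2 * n)) × EuclideanSpace ℝ (Fin (2 * n)) //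
    ‖p.1‖ = 1 ∧ ‖p.2‖ = 1 ∧ ⟪p.1, p.2⟫ = 0}

noncomputable instance (n : ℕ) : TopologicalSpace (QTilde n) :=
  inferInstanceAs (TopologicalSpace
    {p : EuclideanSpace ℝ (Fin (2 * n)) × EuclideanSpace ℝ (Fin (2 * n)) //
      ‖p.1‖ = 1 ∧ ‖p.2‖ = 1 ∧ ⟪p.1, p.2⟫ = 0})

open scoped unitInterval Topology.Homotopy Quaternion

namespace HomotopyGroup

variable {N : Type*} {X Y : Type*} [TopologicalSpace X] [TopologicalSpace Y]

/-- The generalized loop obtained by postcomposing with a continuous map. -/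
def genLoopMap (φ : C(X, Y)) (x : X) (f : Ω^ N X x) : Ω^ N Y (φ x) :=
  ⟨φ.comp f.1, fun y hy => congrArg φ (f.2 y hy)⟩

/-- The homomorphism of homotopy groups induced by a continuous map. -/
noncomputable def map [DecidableEq N] [Nonempty N] (φ : C(X, Y)) (x : X) :
    HomotopyGroup N X x →* HomotopyGroup N Y (φ x) :=
  MonoidHom.mk' (Quotient.map (genLoopMap φ x) fun _ _ ⟨H⟩ => ⟨H.compContinuousMap φ⟩) <| by
    rintro ⟨f⟩ ⟨g⟩
    let i : N := Classical.arbitrary N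
    have h1 := mul_spec (i := i) (p := f) (q := g)
    have h2 := mul_spec (i := i) (p := genLoopMap φ x f) (q := genLoopMap φ x g)
    refine (congrArg (Quotient.map (genLoopMap φ x) _) h1).trans (Eq.trans ?_ h2.symm)
    refine congrArg (Quotient.mk _) ?_
    ext t
    change φ (GenLoop.transAt i g f t) = GenLoop.transAt i _ _ t
    simp only [GenLoop.transAt, GenLoop.coe_copy]
    split_ifs <;> rfl

/-- Homotopy groups commute with binary products. -/
noncomputable def prodEquiv [DecidableEq N] [Nonempty N] (x : X) (y : Y) :
    HomotopyGroup N (X × Y) (x, y) ≃* HomotopyGroup N X x × HomotopyGroup N Y y :=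
  MulEquiv.ofBijective ((map (N := N) (ContinuousMap.fst (α := X) (β := Y)) (x, y)).prod
    (map (N := N) (ContinuousMap.snd (α := X) (β := Y)) (x, y))) <| by
    constructor
    · rintro ⟨f⟩ ⟨g⟩ h
      obtain ⟨⟨H⟩, ⟨K⟩⟩ := And.intro (Quotient.exact (congrArg Prod.fst h))
        (Quotient.exact (congrArg Prod.snd h))
      refine Quotient.sound ⟨⟨⟨H.toContinuousMap.prodMk K.toContinuousMap, fun z => ?_,
        fun z => ?_⟩, fun t z hz => ?_⟩⟩
      · exact Prod.ext (H.apply_zero z) (K.apply_zero z)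
      · exact Prod.ext (H.apply_one z) (K.apply_one z)
      · exact Prod.ext (H.prop' t z hz) (K.prop' t z hz)
    · rintro ⟨⟨f⟩, ⟨g⟩⟩
      exact ⟨⟦⟨f.1.prodMk g.1, fun z hz => Prod.ext (f.2 z hz) (g.2 z hz)⟩⟧, rfl⟩

end HomotopyGroup

/-- Half of `1 - u v`, which conjugates `v` to `u` when `u` and `v` are square roots of `-1`. -/
noncomputable def rotor (u v : ℍ[ℝ]) : ℍ[ℝ] := (2⁻¹ : ℝ) • (1 - u * v)

theorem mul_rotor {u v : ℍ[ℝ]} (hu : u * u = -1) (hv : v * v = -1) :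
    u * rotor u v = rotor u v * v := by
  simp only [rotor, mul_smul_comm, smul_mul_assoc, mul_sub, sub_mul, ← mul_assoc, hu, mul_one]
  rw [mul_assoc u v v, hv]
  congr 1
  simp [add_comm]

theorem rotor_self {u : ℍ[ℝ]} (hu : u * u = -1) : rotor u u = 1 := by
  rw [rotor, hu, sub_neg_eq_add, ← two_smul ℝ (1 : ℍ[ℝ]), smul_smul]
  norm_num

theorem norm_eq_one_of_mul_self {u : ℍ[ℝ]} (hu : u * u = -1) : ‖u‖ = 1 := by
  have h : ‖u‖ * ‖u‖ = 1 := by rw [← norm_mul, hu, norm_neg, norm_one]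
  nlinarith [norm_nonneg u]

theorem rotor_ne_zero {u v : ℍ[ℝ]} (hu : u * u = -1) (huv : dist u v < 2) : rotor u v ≠ 0 := by
  intro h
  have h1 : u * v = 1 := by
    rcases smul_eq_zero.mp h with h | h
    · norm_num at h
    · exact (sub_eq_zero.mp h).symm
  have h2 : v = -u := by
    have := congrArg (u * ·) h1
    simp only [← mul_assoc, hu, mul_one] at this
    rw [← this]; simp
  rw [h2, dist_eq_norm, sub_neg_eq_add, ← two_smul ℝ u, norm_smul, norm_eq_one_of_mul_self hu] at huv
  norm_num at huv

theorem continuous_rotor {A : Type*} [TopologicalSpace A] {f g : A → ℍ[ℝ]} (hf : Continuous f)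
    (hg : Continuous g) : Continuous fun a => rotor (f a) (g a) := by
  unfold rotor; fun_prop

/-- The point `min t (k / n)` of the unit interval. -/
noncomputable def truncAt (n k : ℕ) (t : I) : I :=
  min t (Set.projIcc 0 1 zero_le_one ((k : ℝ) / n))

theorem continuous_truncAt (n k : ℕ) : Continuous (truncAt n k) := by
  unfold truncAt; fun_prop

theorem truncAt_zero (n : ℕ) (t : I) : truncAt n 0 t = 0 := by
  simp [truncAt]

theorem truncAt_self {n : ℕ} (hn : 0 < n) (t : I) : truncAt n n t = t := by
  have : ((n : ℝ) / n) = 1 := div_self (by positivity)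
  simp [truncAt, this, unitInterval.le_one']

theorem truncAt_of_zero (n k : ℕ) : truncAt n k 0 = 0 := by
  simp [truncAt]

theorem dist_truncAt_succ_le (n k : ℕ) (t : I) :
    dist (truncAt n (k + 1) t) (truncAt n k t) ≤ 1 / n := by
  rcases Nat.eq_zero_or_pos n with rfl | hn
  · simp [truncAt]
  have h1 : ∀ a b c d : ℝ, |min a (max 0 (min 1 b)) - min a (max 0 (min 1 c))| ≤ |b - c| := by
    intro a b c d
    refine (abs_min_sub_min_le_max _ _ _ _).trans (max_le (by simp) ?_)
    refine (abs_max_sub_max_le_max _ _ _ _).trans (max_le (by simp) ?_)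
    refine (abs_min_sub_min_le_max _ _ _ _).trans (max_le (by simp) le_rfl)
  have h2 : |(((k + 1 : ℕ) : ℝ) / n) - (k : ℝ) / n| = 1 / n := by
    rw [← sub_div]; simp
  rw [← h2]
  exact h1 t _ _ 0

/-- Lifting, through conjugation, of a homotopy of square roots of `-1`. -/
theorem exists_conj_lift {A : Type*} [TopologicalSpace A] [CompactSpace A]
    (H : C(I × A, ℍ[ℝ])) (hH : ∀ z, H z * H z = -1) :
    ∃ G : C(I × A, ℍ[ℝ]), (∀ z, G z ≠ 0) ∧ (∀ a, G (0, a) = 1) ∧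
      (∀ t a, H (t, a) * G (t, a) = G (t, a) * H (0, a)) ∧
      ∀ a, (∀ t, H (t, a) = H (0, a)) → ∀ t, G (t, a) = 1 := by
  obtain ⟨n, hn, hclose⟩ : ∃ n : ℕ, 0 < n ∧ ∀ s t : I, dist s t ≤ 1 / n → ∀ a,
      dist (H (s, a)) (H (t, a)) < 2 := by
    have hc : Continuous H.curry := H.curry.continuous
    have hu := CompactSpace.uniformContinuous_of_continuous hc
    obtain ⟨δ, hδ, h⟩ := Metric.uniformContinuous_iff.mp hu 2 two_pos
    obtain ⟨n, hn⟩ := exists_nat_one_div_lt hδ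
    refine ⟨n + 1, n.succ_pos, fun s t hst a => ?_⟩
    refine (ContinuousMap.dist_apply_le_dist (f := H.curry s) (g := H.curry t) a).trans_lt ?_
    exact h (hst.trans_lt (by exact_mod_cast hn))
  have key : ∀ k : ℕ, ∃ G : C(I × A, ℍ[ℝ]), (∀ z, G z ≠ 0) ∧ (∀ a, G (0, a) = 1) ∧
      (∀ t a, H (truncAt n k t, a) * G (t, a) = G (t, a) * H (0, a)) ∧
      ∀ a, (∀ t, H (t, a) = H (0, a)) → ∀ t, G (t, a) = 1 := by
    intro k
    induction k with
    | zero => exact ⟨1, by simp, by simp, by simp [truncAt_zero], by simp⟩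
    | succ k ih =>
      obtain ⟨G, h0, h1, h2, h3⟩ := ih
      refine ⟨⟨fun z => rotor (H (truncAt n (k + 1) z.1, z.2)) (H (truncAt n k z.1, z.2)) * G z,
        ?_⟩, ?_, ?_, ?_, ?_⟩
      · refine (continuous_rotor ?_ ?_).mul G.continuous
        · exact H.continuous.comp (((continuous_truncAt _ _).comp continuous_fst).prodMk
            continuous_snd)
        · exact H.continuous.comp (((continuous_truncAt _ _).comp continuous_fst).prodMk
            continuous_snd)
      · intro z
        exact mul_ne_zero (rotor_ne_zero (hH _) (hclose _ _ (dist_truncAt_succ_le _ _ _) _)) (h0 z)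
      · intro a
        simp [truncAt_of_zero, rotor_self (hH _), h1]
      · intro t a
        simp only [ContinuousMap.coe_mk]
        rw [← mul_assoc, mul_rotor (hH _) (hH _), mul_assoc, h2, mul_assoc]
      · intro a ha t
        simp only [ContinuousMap.coe_mk]
        rw [h3 a ha, ha, ha (truncAt n k t), rotor_self (hH _), one_mul]
  obtain ⟨G, h0, h1, h2, h3⟩ := key n
  exact ⟨G, h0, h1, by simpa only [truncAt_self hn] using h2, h3⟩

theorem eq_of_exp_eq_one {B : Type*} [TopologicalSpace B] [PreconnectedSpace B] (g : B → ℂ)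
    (hg : Continuous g) (hg1 : ∀ b, Complex.exp (g b) = 1) (b b' : B) : g b = g b' :=
  congrFun (Complex.isCoveringMap_exp.eq_of_comp_eq (g₁ := g) (g₂ := fun _ => g b') hg
    continuous_const (by funext x; ext; simp [hg1]) b' rfl) b

/-- A nonvanishing complex function on `I × A`, equal to `1` on `{0, 1} × A` and on `I × S`, has a
logarithm vanishing there. -/
theorem exists_log_prod {A : Type*} [TopologicalSpace A] [PreconnectedSpace A] {S : Set A}
    (hS : S.Nonempty) (c : C(I × A, ℂ)) (hc : ∀ z, c z ≠ 0) (h0 : ∀ a, c (0, a) = 1)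
    (h1 : ∀ a, c (1, a) = 1) (hcS : ∀ t, ∀ a ∈ S, c (t, a) = 1) :
    ∃ θ : C(I × A, ℂ), (∀ z, Complex.exp (θ z) = c z) ∧ (∀ a, θ (0, a) = 0) ∧
      (∀ a, θ (1, a) = 0) ∧ ∀ t, ∀ a ∈ S, θ (t, a) = 0 := by
  have cov := Complex.isCoveringMap_exp
  let K : C(I × A, {z : ℂ // z ≠ 0}) := ⟨fun z => ⟨c z, hc z⟩, by fun_prop⟩
  have hK : ∀ a, K (0, a) = (⟨_, (((0 : C(A, ℂ)) a)).exp_ne_zero⟩ : {z : ℂ // z ≠ 0}) := by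
    intro a; ext; simp [K, h0]
  let θ := cov.liftHomotopy K 0 hK
  have hθ : ∀ z, Complex.exp (θ z) = c z := fun z =>
    congrArg Subtype.val (congrFun (cov.liftHomotopy_lifts K 0 hK) z)
  have hθ0 : ∀ a, θ (0, a) = 0 := fun a => cov.liftHomotopy_zero K 0 hK a
  have hθS : ∀ t, ∀ a ∈ S, θ (t, a) = 0 := fun t a ha =>
    (eq_of_exp_eq_one (fun t : I => θ (t, a)) (by fun_prop) (fun t => by rw [hθ, hcS t a ha]) t 0).trans (hθ0 a)
  refine ⟨θ, hθ, hθ0, fun a => ?_, hθS⟩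
  obtain ⟨s, hs⟩ := hS
  exact (eq_of_exp_eq_one (fun a : A => θ (1, a)) (by fun_prop) (fun a => by rw [hθ, h1]) a s).trans
    (hθS 1 s hs)

theorem exists_log_of_boundary {N : Type*} [DecidableEq N] (i : N) [Nonempty {j // j ≠ i}]
    (c : C(I^N, ℂ)) (hc : ∀ y, c y ≠ 0) (hb : ∀ y ∈ Cube.boundary N, c y = 1) :
    ∃ θ : C(I^N, ℂ), (∀ y, Complex.exp (θ y) = c y) ∧ ∀ y ∈ Cube.boundary N, θ y = 0 := by
  obtain ⟨j⟩ := ‹Nonempty {j // j ≠ i}›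
  obtain ⟨θ, h, h0, h1, hS⟩ := exists_log_prod (A := I^{j // j ≠ i}) (S := Cube.boundary _)
    ⟨0, j, Or.inl rfl⟩ (c.comp (Cube.insertAt i)) (fun _ => hc _)
    (fun a => hb _ (Cube.insertAt_boundary i (Or.inl (Or.inl rfl))))
    (fun a => hb _ (Cube.insertAt_boundary i (Or.inl (Or.inr rfl))))
    (fun t a ha => hb _ (Cube.insertAt_boundary i (Or.inr ha)))
  refine ⟨θ.comp (Cube.splitAt i), fun y => (h _).trans ?_, ?_⟩
  · exact congrArg c ((Cube.splitAt i).symm_apply_apply y)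
  · rintro y ⟨k, hk⟩
    by_cases hki : k = i
    · subst hki
      rcases hk with hk | hk
      · refine Eq.trans ?_ (h0 (Cube.splitAt k y).2)
        exact congrArg θ (Prod.ext hk rfl)
      · refine Eq.trans ?_ (h1 (Cube.splitAt k y).2)
        exact congrArg θ (Prod.ext hk rfl)
    · exact hS (y i) (Cube.splitAt i y).2 ⟨⟨k, hki⟩, hk⟩

theorem re_eq_zero_of_mul_self {u : ℍ[ℝ]} (hu : u * u = -1) : u.re = 0 := by
  have h0 := congrArg (·.re) hu
  have h1 := congrArg (·.imI) hu
  have h2 := congrArg (·.imJ) hu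
  have h3 := congrArg (·.imK) hu
  simp at h0 h1 h2 h3
  by_contra h
  have e1 : u.imI = 0 := by
    apply mul_left_cancel₀ h; linarith
  have e2 : u.imJ = 0 := by
    apply mul_left_cancel₀ h; linarith
  have e3 : u.imK = 0 := by
    apply mul_left_cancel₀ h; linarith
  rw [e1, e2, e3] at h0
  nlinarith

/-- The coordinates of `q` along `1` and a square root `u` of `-1`. -/
noncomputable def complexCoord (u q : ℍ[ℝ]) : ℂ := ⟨q.re, -(q * u).re⟩

theorem lift_complexCoord {u : ℍ[ℝ]} (hu : u * u = -1) {q : ℍ[ℝ]} (h : u * q = q * u) :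
    Complex.lift ⟨u, hu⟩ (complexCoord u q) = q := by
  have hr := re_eq_zero_of_mul_self hu
  have h0 := congrArg (·.re) hu
  have h1 := congrArg (·.imI) h
  have h2 := congrArg (·.imJ) h
  have h3 := congrArg (·.imK) h
  simp [hr] at h0 h1 h2 h3
  simp only [Complex.lift_apply, Complex.liftAux_apply, complexCoord]
  ext <;> simp [hr]
  · linear_combination (u.imJ/2) * h3 - (u.imK/2) * h2 - q.imI * h0
  · linear_combination -(u.imI/2) * h3 + (u.imK/2) * h1 - q.imJ * h0
  · linear_combination (u.imI/2) * h2 - (u.imJ/2) * h1 - q.imK * h0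

theorem complexCoord_one {u : ℍ[ℝ]} (hu : u * u = -1) : complexCoord u 1 = 1 := by
  simp [complexCoord, re_eq_zero_of_mul_self hu, Complex.ext_iff]

theorem continuous_complexCoord (u : ℍ[ℝ]) : Continuous (complexCoord u) := by
  have : complexCoord u = fun q => Complex.equivRealProdCLM.symm (q.re, -(q * u).re) := rfl
  rw [this]
  have h := Quaternion.continuous_re
  fun_prop

theorem continuous_complexLift {u : ℍ[ℝ]} (hu : u * u = -1) :
    Continuous (Complex.lift ⟨u, hu⟩) :=
  (Complex.lift ⟨u, hu⟩).toLinearMap.continuous_of_finiteDimensional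

theorem mul_complexLift {u : ℍ[ℝ]} (hu : u * u = -1) (z : ℂ) :
    u * Complex.lift ⟨u, hu⟩ z = Complex.lift ⟨u, hu⟩ z * u := by
  have h : u = Complex.lift ⟨u, hu⟩ Complex.I := by simp
  nth_rewrite 1 [h]
  rw [← map_mul, mul_comm, map_mul, ← h]

/-- A cube of quaternions commuting with `u`, equal to `1` on the boundary, is the exponential of
a function vanishing on the boundary. -/
theorem exists_log_of_commute {N : Type*} [DecidableEq N] (i : N) [Nonempty {j // j ≠ i}]
    {u : ℍ[ℝ]} (hu : u * u = -1) (q : C(I^N, ℍ[ℝ])) (hq : ∀ y, q y ≠ 0)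
    (hcomm : ∀ y, u * q y = q y * u) (hb : ∀ y ∈ Cube.boundary N, q y = 1) :
    ∃ θ : C(I^N, ℂ), (∀ y, Complex.lift ⟨u, hu⟩ (Complex.exp (θ y)) = q y) ∧
      ∀ y ∈ Cube.boundary N, θ y = 0 := by
  obtain ⟨θ, h, h'⟩ := exists_log_of_boundary i
    ⟨fun y => complexCoord u (q y), (continuous_complexCoord u).comp q.continuous⟩
    (fun y h => hq y (by
      rw [← lift_complexCoord hu (hcomm y)]
      exact (congrArg _ h).trans (map_zero _)))
    (fun y hy => by simp [hb y hy, complexCoord_one hu])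
  refine ⟨θ, fun y => ?_, h'⟩
  rw [h]
  exact lift_complexCoord hu (hcomm y)

/-- The space of nonzero quaternions. -/
abbrev NonzeroQuaternion : Type := {q : ℍ[ℝ] // q ≠ 0}

instance : One NonzeroQuaternion := ⟨⟨1, one_ne_zero⟩⟩

theorem NonzeroQuaternion.coe_one : ((1 : NonzeroQuaternion) : ℍ[ℝ]) = 1 := rfl

theorem NonzeroQuaternion.homotopic_of {N : Type*} {f g : Ω^ N NonzeroQuaternion 1}
    (H : C(I × (I^N), ℍ[ℝ])) (hH : ∀ z, H z ≠ 0) (h0 : ∀ y, H (0, y) = f y)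
    (h1 : ∀ y, H (1, y) = g y) (hb : ∀ t, ∀ y ∈ Cube.boundary N, H (t, y) = 1) :
    GenLoop.Homotopic f g :=
  ⟨⟨⟨⟨fun z => ⟨H z, hH z⟩, by fun_prop⟩, fun y => Subtype.ext (h0 y), fun y => Subtype.ext (h1 y)⟩,
    fun t y hy => Subtype.ext ((hb t y hy).trans (congrArg Subtype.val (f.2 y hy).symm))⟩⟩

theorem mul_self_inv_mul {a b : ℍ[ℝ]} (ha : ‖a‖ = 1) (hb : ‖b‖ = 1) (hab : ⟪a, b⟫ = 0) :
    (a⁻¹ * b) * (a⁻¹ * b) = -1 := by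
  have hinv : a⁻¹ = star a := by
    rw [Quaternion.inv_def, Quaternion.normSq_eq_norm_mul_self, ha]; simp
  have hre : (a⁻¹ * b).re = 0 := by
    rw [hinv]
    rw [Quaternion.inner_def] at hab
    simp at hab ⊢
    linarith
  have hnorm : Quaternion.normSq (a⁻¹ * b) = 1 := by
    rw [Quaternion.normSq_eq_norm_mul_self, norm_mul, norm_inv, ha, hb]; simp
  have hstar : star (a⁻¹ * b) = -(a⁻¹ * b) := Quaternion.star_eq_neg.mpr hre
  have := Quaternion.self_mul_star (a⁻¹ * b)
  rw [hstar, hnorm, mul_neg] at this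
  rw [← neg_neg (a⁻¹ * b * (a⁻¹ * b)), this]; simp

theorem inner_mul_right_eq_zero {a w : ℍ[ℝ]} (ha : ‖a‖ = 1) (hw : w * w = -1) :
    ⟪a, a * w⟫ = 0 := by
  have h := re_eq_zero_of_mul_self hw
  have hn : Quaternion.normSq a = 1 := by
    rw [Quaternion.normSq_eq_norm_mul_self, ha]; simp
  rw [Quaternion.inner_def]
  simp [h]
  ring

/-- The unit quaternion in the direction of a nonzero quaternion. -/
noncomputable def unitPart (p : ℍ[ℝ]) : ℍ[ℝ] := ‖p‖⁻¹ • p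

theorem norm_unitPart {p : ℍ[ℝ]} (hp : p ≠ 0) : ‖unitPart p‖ = 1 := by
  simp [unitPart, norm_smul, hp]

theorem unitPart_of_norm {p : ℍ[ℝ]} (hp : ‖p‖ = 1) : unitPart p = p := by
  simp [unitPart, hp]

theorem conj_mul_self {u q : ℍ[ℝ]} (hu : u * u = -1) (hq : q ≠ 0) :
    (q * u * q⁻¹) * (q * u * q⁻¹) = -1 := by
  calc _ = q * u * (q⁻¹ * q) * u * q⁻¹ := by noncomm_ring
    _ = q * (u * u) * q⁻¹ := by rw [inv_mul_cancel₀ hq]; noncomm_ring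
    _ = -1 := by rw [hu]; simp [hq]

namespace QTilde

/-- The identification of the quaternions with four-dimensional Euclidean space. -/
noncomputable abbrev coords : ℍ[ℝ] ≃ₗᵢ[ℝ] EuclideanSpace ℝ (Fin (2 * 2)) :=
  Quaternion.linearIsometryEquivTuple

/-- The orthonormal frame given by orthonormal quaternions `a`, `b`. -/
noncomputable def frame (a b : ℍ[ℝ]) (h : ‖a‖ = 1 ∧ ‖b‖ = 1 ∧ ⟪a, b⟫ = 0) : QTilde 2 :=
  ⟨(coords a, coords b), by simpa only [LinearIsometryEquiv.norm_map,
    LinearIsometryEquiv.inner_map_map] using h⟩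

/-- The first vector of a frame, as a quaternion. -/
noncomputable def fstQ (x : QTilde 2) : ℍ[ℝ] := coords.symm x.1.1

/-- The second vector of a frame, as a quaternion. -/
noncomputable def sndQ (x : QTilde 2) : ℍ[ℝ] := coords.symm x.1.2

theorem continuous_fstQ : Continuous fstQ :=
  coords.symm.continuous.comp (continuous_fst.comp continuous_subtype_val)

theorem continuous_sndQ : Continuous sndQ :=
  coords.symm.continuous.comp (continuous_snd.comp continuous_subtype_val)

theorem orthonormal (x : QTilde 2) : ‖fstQ x‖ = 1 ∧ ‖sndQ x‖ = 1 ∧ ⟪fstQ x, sndQ x⟫ = 0 := by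
  simpa only [fstQ, sndQ, LinearIsometryEquiv.norm_map, LinearIsometryEquiv.inner_map_map]
    using x.2

theorem fstQ_ne_zero (x : QTilde 2) : fstQ x ≠ 0 :=
  norm_ne_zero_iff.mp (by rw [(orthonormal x).1]; exact one_ne_zero)

theorem ext_quaternion {x y : QTilde 2} (h1 : fstQ x = fstQ y) (h2 : sndQ x = sndQ y) : x = y :=
  Subtype.ext (Prod.ext (coords.symm.injective h1) (coords.symm.injective h2))

/-- The imaginary unit `a⁻¹ b` of a frame `(a, b)`. -/
noncomputable def slope (x : QTilde 2) : ℍ[ℝ] := (fstQ x)⁻¹ * sndQ x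

theorem slope_mul_self (x : QTilde 2) : slope x * slope x = -1 :=
  mul_self_inv_mul (orthonormal x).1 (orthonormal x).2.1 (orthonormal x).2.2

theorem continuous_slope : Continuous slope :=
  (continuous_fstQ.inv₀ fstQ_ne_zero).mul continuous_sndQ

theorem fstQ_mul_slope (x : QTilde 2) : fstQ x * slope x = sndQ x :=
  mul_inv_cancel_left₀ (fstQ_ne_zero x) _

/-- The map sending `(p, q)` to the frame `(p a, p a q u q⁻¹)`, where `p` is normalized, `a` is the
first vector of `x` and `u` is the slope of `x`. -/
noncomputable def spin (x : QTilde 2) : C(NonzeroQuaternion × NonzeroQuaternion, QTilde 2) where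
  toFun z := frame (unitPart z.1.1 * fstQ x)
    (unitPart z.1.1 * fstQ x * (z.2.1 * slope x * z.2.1⁻¹)) <| by
      have h1 : ‖unitPart z.1.1 * fstQ x‖ = 1 := by
        rw [norm_mul, norm_unitPart z.1.2, (orthonormal x).1, one_mul]
      have h2 := conj_mul_self (slope_mul_self x) z.2.2
      exact ⟨h1, by rw [norm_mul, h1, norm_eq_one_of_mul_self h2, one_mul],
        inner_mul_right_eq_zero h1 h2⟩
  continuous_toFun := by
    have h1 : Continuous fun z : NonzeroQuaternion × NonzeroQuaternion => unitPart z.1.1 := by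
      unfold unitPart
      exact ((continuous_norm.comp (by fun_prop)).inv₀ (fun z => norm_ne_zero_iff.mpr z.1.2)).smul
        (by fun_prop)
    have h2 : Continuous fun z : NonzeroQuaternion × NonzeroQuaternion => (z.2.1)⁻¹ :=
      Continuous.inv₀ (by fun_prop) (fun z => z.2.2)
    refine Continuous.subtype_mk (Continuous.prodMk ?_ ?_) _
    · exact coords.continuous.comp (by fun_prop)
    · exact coords.continuous.comp (by fun_prop)

theorem fstQ_spin (x : QTilde 2) (z) : fstQ (spin x z) = unitPart z.1.1 * fstQ x :=
  coords.symm_apply_apply _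

theorem sndQ_spin (x : QTilde 2) (z) : sndQ (spin x z) =
    unitPart z.1.1 * fstQ x * (z.2.1 * slope x * z.2.1⁻¹) :=
  coords.symm_apply_apply _

theorem slope_spin (x : QTilde 2) (z) : slope (spin x z) = z.2.1 * slope x * z.2.1⁻¹ := by
  rw [slope, sndQ_spin, ← fstQ_spin, inv_mul_cancel_left₀ (fstQ_ne_zero _)]

theorem spin_one (x : QTilde 2) : spin x (1, 1) = x := by
  apply ext_quaternion
  · rw [fstQ_spin, unitPart_of_norm] <;> simp [NonzeroQuaternion.coe_one]
  · rw [sndQ_spin, unitPart_of_norm] <;> simp [NonzeroQuaternion.coe_one, fstQ_mul_slope]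

theorem eq_spin {x y : QTilde 2} {z} (h1 : fstQ y = unitPart z.1.1 * fstQ x)
    (h2 : slope y * z.2.1 = z.2.1 * slope x) : spin x z = y := by
  apply ext_quaternion
  · rw [fstQ_spin, h1]
  · rw [sndQ_spin, ← h1, ← h2, mul_inv_cancel_right₀ z.2.2, fstQ_mul_slope]

/-- A quaternion loop from a map to the quaternions. -/
noncomputable def mkLoop {N : Type*} (f : C(I^N, ℍ[ℝ])) (hf : ∀ y, f y ≠ 0)
    (hb : ∀ y ∈ Cube.boundary N, f y = 1) : Ω^ N NonzeroQuaternion 1 :=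
  ⟨⟨fun y => ⟨f y, hf y⟩, by fun_prop⟩, fun y hy => Subtype.ext (hb y hy)⟩

theorem lift_exp_ne_zero {u : ℍ[ℝ]} (hu : u * u = -1) (z : ℂ) :
    Complex.lift ⟨u, hu⟩ (Complex.exp z) ≠ 0 := by
  intro h
  have h2 : Complex.lift ⟨u, hu⟩ (Complex.exp z * Complex.exp (-z)) = 0 := by
    rw [map_mul, h, zero_mul]
  rw [← Complex.exp_add, add_neg_cancel, Complex.exp_zero, map_one] at h2
  exact one_ne_zero h2

theorem map_spin_surjective (x : QTilde 2) :
    Function.Surjective (HomotopyGroup.map (N := Fin 3) (spin x) (1, 1)) := by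
  rintro ⟨g⟩
  have hgb : ∀ y ∈ Cube.boundary (Fin 3), g y = x := fun y hy => (g.2 y hy).trans (spin_one x)
  obtain ⟨G, h0, h1, h2, h3⟩ := exists_conj_lift (A := I^{j : Fin 3 // j ≠ 0})
    ⟨fun z => slope (g (Cube.insertAt 0 z)), continuous_slope.comp (g.1.continuous.comp
      (Cube.insertAt 0).continuous)⟩ (fun z => slope_mul_self _)
  simp only [ContinuousMap.coe_mk] at h2 h3
  have hg0 : ∀ a, g (Cube.insertAt 0 (0, a)) = x := fun a =>
    hgb _ (Cube.insertAt_boundary 0 (Or.inl (Or.inl rfl)))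
  have hg1 : ∀ a, g (Cube.insertAt 0 (1, a)) = x := fun a =>
    hgb _ (Cube.insertAt_boundary 0 (Or.inl (Or.inr rfl)))
  have hgS : ∀ t, ∀ a ∈ Cube.boundary _, g (Cube.insertAt 0 (t, a)) = x := fun t a ha =>
    hgb _ (Cube.insertAt_boundary 0 (Or.inr ha))
  have hGS : ∀ t, ∀ a ∈ Cube.boundary _, G (t, a) = 1 := fun t a ha =>
    h3 a (fun t => by rw [hgS t a ha, hgS 0 a ha]) t
  have hu := slope_mul_self x
  have : Nonempty {k : {j : Fin 3 // j ≠ 0} // k ≠ ⟨1, one_ne_zero⟩} := ⟨⟨⟨2, by decide⟩, by decide⟩⟩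
  obtain ⟨θ, hθ, hθb⟩ := exists_log_of_commute (⟨1, one_ne_zero⟩ : {j : Fin 3 // j ≠ 0}) hu
    ⟨fun a => G (1, a), by fun_prop⟩ (fun a => h0 _) (fun a => by simpa [hg0, hg1] using h2 1 a)
    (fun a ha => hGS 1 a ha)
  let E : C(I^(Fin 3), ℍ[ℝ]) := ⟨fun y => Complex.lift ⟨slope x, hu⟩
    (Complex.exp (-((((Cube.splitAt 0 y).1 : ℝ) : ℂ) * θ (Cube.splitAt 0 y).2))),
    (continuous_complexLift hu).comp (by fun_prop)⟩
  have hE0 : ∀ y, E y ≠ 0 := fun y => lift_exp_ne_zero hu _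
  let p : C(I^(Fin 3), ℍ[ℝ]) := ⟨fun y => fstQ (g y) * (fstQ x)⁻¹,
    (continuous_fstQ.comp g.1.continuous).mul continuous_const⟩
  have hp : ∀ y, ‖p y‖ = 1 := fun y => by
    simp [p, (orthonormal _).1]
  have hbd : ∀ y ∈ Cube.boundary (Fin 3), G (Cube.splitAt 0 y) * E y = 1 := by
    rintro y ⟨k, hk⟩
    by_cases hk0 : k = 0
    · subst hk0
      rcases hk with hk | hk
      · have e : Cube.splitAt 0 y = (0, (Cube.splitAt 0 y).2) := Prod.ext hk rfl
        have : E y = 1 := by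
          simp only [E, ContinuousMap.coe_mk]; rw [e]; simp
        rw [this, e, h1, mul_one]
      · have e : Cube.splitAt 0 y = (1, (Cube.splitAt 0 y).2) := Prod.ext hk rfl
        have hh := hθ (Cube.splitAt 0 y).2
        simp only [ContinuousMap.coe_mk] at hh
        simp only [E, ContinuousMap.coe_mk]
        rw [e]
        simp only [Set.Icc.coe_one, Complex.ofReal_one, one_mul]
        rw [← hh, ← map_mul, ← Complex.exp_add]; simp
    · have hm : (Cube.splitAt 0 y).2 ∈ Cube.boundary {j : Fin 3 // j ≠ 0} := ⟨⟨k, hk0⟩, hk⟩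
      have : E y = 1 := by
        simp only [E, ContinuousMap.coe_mk]; rw [hθb _ hm]; simp
      rw [this, mul_one]
      exact hGS _ _ hm
  refine ⟨⟦⟨(mkLoop p (fun y => norm_ne_zero_iff.mp (by rw [hp]; exact one_ne_zero)) (fun y hy => by
    simp [p, hgb y hy, fstQ_ne_zero])).1.prodMk (mkLoop ⟨fun y => G (Cube.splitAt 0 y) * E y, by
      exact (G.continuous.comp (Cube.splitAt 0).continuous).mul E.continuous⟩
      (fun y => mul_ne_zero (h0 _) (hE0 y)) hbd).1, fun y hy => Prod.ext (Subtype.ext ?_)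
        (Subtype.ext (hbd y hy))⟩⟧, ?_⟩
  · change p y = 1
    simp [p, hgb y hy, fstQ_ne_zero]
  · refine congrArg (Quotient.mk _) (Subtype.ext (ContinuousMap.ext fun y => ?_))
    refine eq_spin ?_ ?_
    · change _ = unitPart (p y) * _
      rw [unitPart_of_norm (hp y)]
      exact (inv_mul_cancel_right₀ (fstQ_ne_zero x) _).symm
    · change slope (g y) * (G (Cube.splitAt 0 y) * E y) = (G (Cube.splitAt 0 y) * E y) * slope x
      have e : Cube.insertAt 0 (Cube.splitAt 0 y) = y := (Cube.splitAt 0).symm_apply_apply y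
      have hh := h2 (Cube.splitAt 0 y).1 (Cube.splitAt 0 y).2
      rw [Prod.mk.eta, e, hg0] at hh
      rw [← mul_assoc, hh, mul_assoc, mul_assoc]
      exact congrArg _ (mul_complexLift hu _)

theorem map_spin_injective (x : QTilde 2) :
    Function.Injective (HomotopyGroup.map (N := Fin 3) (spin x) (1, 1)) := by
  rw [injective_iff_map_eq_one]
  rintro ⟨f⟩ hf
  obtain ⟨K⟩ : GenLoop.Homotopic (HomotopyGroup.genLoopMap (spin x) (1, 1) f) GenLoop.const :=
    Quotient.exact hf
  have hu := slope_mul_self x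
  have hK0 : ∀ y, K (0, y) = spin x (f y) := fun y => K.apply_zero y
  have hK1 : ∀ y, K (1, y) = x := fun y => (K.apply_one y).trans (spin_one x)
  have hKb : ∀ t, ∀ y ∈ Cube.boundary _, K (t, y) = x := fun t y hy => by
    refine (K.prop' t y hy).trans ?_
    exact ((congrArg (spin x) (f.2 y hy))).trans (spin_one x)
  have hfb : ∀ y ∈ Cube.boundary _, f y = (1, 1) := fun y hy => f.2 y hy
  have hp : (HomotopyGroup.map (N := Fin 3) ContinuousMap.fst ((1, 1) : NonzeroQuaternion × NonzeroQuaternion)) ⟦f⟧ = 1 := by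
    let f' : Ω^ (Fin 3) NonzeroQuaternion 1 := mkLoop ⟨fun y => fstQ (K (0, y)) * (fstQ x)⁻¹,
        (continuous_fstQ.comp (K.continuous.comp (by fun_prop))).mul continuous_const⟩
        (fun y => mul_ne_zero (fstQ_ne_zero _) (inv_ne_zero (fstQ_ne_zero _)))
        (fun y hy => by
          rw [ContinuousMap.coe_mk, hKb 0 y hy, mul_inv_cancel₀ (fstQ_ne_zero x)])
    have hf' : ∀ y, (f' y : ℍ[ℝ]) = unitPart (f y).1.1 := fun y => by
      change fstQ (K (0, y)) * _ = _
      rw [hK0, fstQ_spin, mul_inv_cancel_right₀ (fstQ_ne_zero x)]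
    have hpc : Continuous fun y => ((f y).1 : ℍ[ℝ]) :=
      continuous_subtype_val.comp (continuous_fst.comp f.1.continuous)
    refine Quotient.sound (s := GenLoop.Homotopic.setoid _ _) (GenLoop.Homotopic.trans (g := f') ?_ ?_)
    · have hpos : ∀ z : I × (I^(Fin 3)), 0 < (1 - (z.1 : ℝ)) + z.1 * ‖((f z.2).1 : ℍ[ℝ])‖⁻¹ := by
        intro z
        have h1 : 0 < ‖((f z.2).1 : ℍ[ℝ])‖⁻¹ := inv_pos.mpr (norm_pos_iff.mpr (f z.2).1.2)
        rcases z.1.2.2.eq_or_lt with h | h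
        · rw [h]; linarith
        · have := z.1.2.1
          have := mul_nonneg this h1.le
          linarith
      refine NonzeroQuaternion.homotopic_of
        ⟨fun z => ((1 - (z.1 : ℝ)) + z.1 * ‖((f z.2).1 : ℍ[ℝ])‖⁻¹) • ((f z.2).1 : ℍ[ℝ]), ?_⟩
        ?_ ?_ ?_ ?_
      · have h1 : Continuous fun z : I × (I^(Fin 3)) => ((f z.2).1 : ℍ[ℝ]) :=
          hpc.comp continuous_snd
        have h2 : Continuous fun z : I × (I^(Fin 3)) => ‖((f z.2).1 : ℍ[ℝ])‖⁻¹ :=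
          h1.norm.inv₀ (fun z => norm_ne_zero_iff.mpr (f z.2).1.2)
        fun_prop
      · exact fun z => smul_ne_zero (hpos z).ne' (f z.2).1.2
      · intro y; simp; rfl
      · intro y; simp [hf', unitPart]
      · intro t y hy; simp [hfb y hy, NonzeroQuaternion.coe_one]
    · refine NonzeroQuaternion.homotopic_of
        ⟨fun z => fstQ (K z) * (fstQ x)⁻¹,
          (continuous_fstQ.comp K.continuous).mul continuous_const⟩ ?_ ?_ ?_ ?_
      · exact fun z => mul_ne_zero (fstQ_ne_zero _) (inv_ne_zero (fstQ_ne_zero _))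
      · exact fun y => rfl
      · intro y; simp [hK1, fstQ_ne_zero]; rfl
      · intro t y hy; simp [hKb t y hy, fstQ_ne_zero]
  have hq : (HomotopyGroup.map (N := Fin 3) ContinuousMap.snd ((1, 1) : NonzeroQuaternion × NonzeroQuaternion)) ⟦f⟧ = 1 := by
    have hqc : Continuous fun y => ((f y).2 : ℍ[ℝ]) :=
      continuous_subtype_val.comp (continuous_snd.comp f.1.continuous)
    obtain ⟨G, h0, h1, h2, h3⟩ := exists_conj_lift (A := I^(Fin 3))
      ⟨fun z => slope (K z), continuous_slope.comp K.continuous⟩ (fun z => slope_mul_self _)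
    simp only [ContinuousMap.coe_mk] at h2 h3
    let F : C(I × (I^(Fin 3)), ℍ[ℝ]) := ⟨fun z => G z * (f z.2).2.1,
      G.continuous.mul (hqc.comp continuous_snd)⟩
    have hF : ∀ z, F z ≠ 0 := fun z => mul_ne_zero (h0 z) (f z.2).2.2
    have hFb : ∀ t, ∀ y ∈ Cube.boundary _, F (t, y) = 1 := by
      intro t y hy
      simp only [F, ContinuousMap.coe_mk]
      rw [h3 y (fun t => by rw [hKb t y hy, hKb 0 y hy]) t, hfb y hy]
      simp [NonzeroQuaternion.coe_one]
    have : Nonempty {k : Fin 3 // k ≠ 0} := ⟨⟨1, by decide⟩⟩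
    obtain ⟨θ, hθ, hθb⟩ := exists_log_of_commute (N := Fin 3) 0 hu
      ⟨fun a => F (1, a), by fun_prop⟩ (fun a => hF _) (fun y => by
        have := h2 1 y
        rw [hK1, hK0, slope_spin] at this
        simp only [F, ContinuousMap.coe_mk]
        rw [← mul_assoc, this, mul_assoc, inv_mul_cancel_right₀ (f y).2.2, mul_assoc]) (hFb 1)
    simp only [ContinuousMap.coe_mk] at hθ
    let f' : Ω^ (Fin 3) NonzeroQuaternion 1 := mkLoop ⟨fun y => F (1, y), by fun_prop⟩
      (fun y => hF _) (hFb 1)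
    refine Quotient.sound (s := GenLoop.Homotopic.setoid _ _) (GenLoop.Homotopic.trans (g := f') ?_ ?_)
    · refine NonzeroQuaternion.homotopic_of F hF ?_ (fun y => rfl) hFb
      intro y; simp [F, h1]; rfl
    · refine NonzeroQuaternion.homotopic_of
        ⟨fun z => Complex.lift ⟨slope x, hu⟩ (Complex.exp ((1 - ((z.1 : ℝ) : ℂ)) * θ z.2)),
          (continuous_complexLift hu).comp (by fun_prop)⟩ (fun z => lift_exp_ne_zero hu _) ?_ ?_ ?_
      · intro y
        simp only [ContinuousMap.coe_mk, Set.Icc.coe_zero, Complex.ofReal_zero, sub_zero, one_mul]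
        exact hθ y
      · intro y; simp; rfl
      · intro t y hy; simp [hθb y hy]
  apply (HomotopyGroup.prodEquiv (N := Fin 3) (1 : NonzeroQuaternion) (1 : NonzeroQuaternion)).injective
  rw [map_one]
  exact Prod.ext hp hq

/-- The third homotopy group of `QTilde 2` is the square of that of the nonzero quaternions. -/
theorem nonempty_piThreeEquiv (x : QTilde 2) : Nonempty (π_ 3 (QTilde 2) x ≃*
    π_ 3 NonzeroQuaternion 1 × π_ 3 NonzeroQuaternion 1) := by
  have h : Nonempty (π_ 3 (QTilde 2) (spin x (1, 1)) ≃*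
      π_ 3 NonzeroQuaternion 1 × π_ 3 NonzeroQuaternion 1) :=
    ⟨(MulEquiv.ofBijective _ ⟨map_spin_injective x, map_spin_surjective x⟩).symm.trans
      (HomotopyGroup.prodEquiv (N := Fin 3) (1 : NonzeroQuaternion) (1 : NonzeroQuaternion))⟩
  rwa [spin_one] at h

end QTilde

/-- The open unit cube in `ℝ³`. -/
def openCube : Set (Fin 3 → ℝ) := {x | ∀ i, 0 < x i ∧ x i < 1}

theorem isOpen_openCube : IsOpen openCube := by
  have : openCube = ⋂ i, {x : Fin 3 → ℝ | 0 < x i ∧ x i < 1} := by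
    ext; simp [openCube]
  rw [this]
  refine isOpen_iInter_of_finite fun i => ?_
  exact (isOpen_lt continuous_const (continuous_apply i)).inter
    (isOpen_lt (continuous_apply i) continuous_const)

/-- A continuous nowhere vanishing quaternionic function on `ℝ³`, equal to `1` off the open unit
cube. -/
structure QLoop where
  /-- The underlying function. -/
  toFun : (Fin 3 → ℝ) → ℍ[ℝ]
  continuous' : Continuous toFun
  ne_zero' : ∀ x, toFun x ≠ 0
  eq_one' : ∀ x, x ∉ openCube → toFun x = 1

namespace QLoop

instance : CoeFun QLoop fun _ => (Fin 3 → ℝ) → ℍ[ℝ] := ⟨toFun⟩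

theorem continuous (f : QLoop) : Continuous f := f.continuous'

theorem ne_zero (f : QLoop) (x) : f x ≠ 0 := f.ne_zero' x

theorem eq_one (f : QLoop) {x} (hx : x ∉ openCube) : f x = 1 := f.eq_one' x hx

theorem coe_notMem_openCube {y : I^(Fin 3)} (hy : y ∈ Cube.boundary (Fin 3)) :
    (fun i => (y i : ℝ)) ∉ openCube := by
  obtain ⟨i, h | h⟩ := hy <;> intro H <;> have := H i <;> simp [h] at this

/-- The restriction to the unit cube. -/
noncomputable def genLoop (f : QLoop) : Ω^ (Fin 3) NonzeroQuaternion 1 :=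
  QTilde.mkLoop ⟨fun y => f fun i => y i, f.continuous.comp (by fun_prop)⟩ (fun _ => f.ne_zero _)
    fun _ hy => f.eq_one (coe_notMem_openCube hy)

theorem coe_genLoop (f : QLoop) (y) : (f.genLoop y : ℍ[ℝ]) = f fun i => y i := rfl

/-- The homotopy class of a quaternionic loop. -/
noncomputable def cls (f : QLoop) : π_ 3 NonzeroQuaternion 1 :=
  (⟦f.genLoop⟧ : HomotopyGroup (Fin 3) NonzeroQuaternion 1)

/-- The nearest point of the unit cube. -/
noncomputable def clamp (x : Fin 3 → ℝ) : I^(Fin 3) := fun i => Set.projIcc 0 1 zero_le_one (x i)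

theorem continuous_clamp : Continuous clamp :=
  continuous_pi fun i => continuous_projIcc.comp (continuous_apply i)

theorem clamp_mem_boundary {x : Fin 3 → ℝ} (hx : x ∉ openCube) :
    clamp x ∈ Cube.boundary (Fin 3) := by
  simp only [openCube, Set.mem_ofPred_eq, not_forall] at hx
  obtain ⟨i, hi⟩ := hx
  refine ⟨i, ?_⟩
  rcases le_or_gt (x i) 0 with h | h
  · exact Or.inl (Set.projIcc_of_le_left _ h)
  · exact Or.inr (Set.projIcc_of_right_le _ (not_lt.mp fun h' => hi ⟨h, h'⟩))

theorem coe_clamp {x : Fin 3 → ℝ} (hx : x ∈ openCube) : (fun i => (clamp x i : ℝ)) = x := by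
  funext i
  simp only [clamp, Set.projIcc_of_mem zero_le_one (⟨(hx i).1.le, (hx i).2.le⟩ : x i ∈ Set.Icc (0 : ℝ) 1)]

theorem clamp_coe (y : I^(Fin 3)) : clamp (fun i => (y i : ℝ)) = y := by
  funext i
  exact Set.projIcc_val zero_le_one (y i)

theorem apply_clamp (f : QLoop) (x) : f (fun i => clamp x i) = f x := by
  by_cases hx : x ∈ openCube
  · rw [coe_clamp hx]
  · rw [f.eq_one hx, f.eq_one (coe_notMem_openCube (clamp_mem_boundary hx))]

theorem cls_surjective : Function.Surjective cls := by
  rintro ⟨g⟩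
  refine ⟨⟨fun x => g (clamp x), continuous_subtype_val.comp (g.1.continuous.comp continuous_clamp),
    fun x => (g (clamp x)).2, fun x hx => congrArg Subtype.val (g.2 _ (clamp_mem_boundary hx))⟩, ?_⟩
  refine congrArg (Quotient.mk _) (Subtype.ext (ContinuousMap.ext fun y => Subtype.ext ?_))
  change (g (clamp _) : ℍ[ℝ]) = g y
  rw [clamp_coe]

theorem cls_eq_of_homotopy {f g : QLoop} (H : ℝ × (Fin 3 → ℝ) → ℍ[ℝ]) (hH : Continuous H)
    (hne : ∀ t ∈ Set.Icc (0 : ℝ) 1, ∀ x, H (t, x) ≠ 0)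
    (h1 : ∀ t ∈ Set.Icc (0 : ℝ) 1, ∀ x ∉ openCube, H (t, x) = 1)
    (hf : ∀ x, H (0, x) = f x) (hg : ∀ x, H (1, x) = g x) : cls f = cls g :=
  Quotient.sound (s := GenLoop.Homotopic.setoid _ _) <| NonzeroQuaternion.homotopic_of
    ⟨fun z => H (z.1, fun i => z.2 i), hH.comp (by fun_prop)⟩ (fun z => hne _ z.1.2 _)
    (fun y => hf _) (fun y => hg _) fun t _ hy => h1 _ t.2 _ (coe_notMem_openCube hy)

theorem cls_eq_of_segment {f g : QLoop}
    (h : ∀ t ∈ Set.Icc (0 : ℝ) 1, ∀ x, (1 - t) • f x + t • g x ≠ 0) : cls f = cls g := by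
  refine cls_eq_of_homotopy (fun z => (1 - z.1) • f z.2 + z.1 • g z.2) ?_ h ?_ ?_ ?_
  · have := f.continuous
    have := g.continuous
    fun_prop
  · intro t _ x hx
    simp [f.eq_one hx, g.eq_one hx, ← add_smul]
  · simp
  · simp

/-- A locally constant function on quaternionic loops depends only on the homotopy class. -/
theorem eq_of_cls_eq {α : Type*} {D : QLoop → α}
    (hD : ∀ f : QLoop, ∃ ε > 0, ∀ g : QLoop, (∀ x, ‖g x - f x‖ < ε) → D g = D f) {f g : QLoop}
    (h : cls f = cls g) : D f = D g := by
  obtain ⟨H⟩ : GenLoop.Homotopic f.genLoop g.genLoop := Quotient.exact h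
  let F : I → QLoop := fun t => ⟨fun x => H (t, clamp x),
    continuous_subtype_val.comp (H.continuous.comp (by have := continuous_clamp; fun_prop)),
    fun x => (H (t, clamp x)).2, fun x hx => by
      have hb := clamp_mem_boundary hx
      have := H.prop' t _ hb
      exact (congrArg Subtype.val this).trans (congrArg Subtype.val (f.genLoop.2 _ hb))⟩
  have h0 : F 0 = f := by
    have : (F 0).toFun = f.toFun := by
      funext x
      exact (congrArg Subtype.val (H.apply_zero (clamp x))).trans (f.apply_clamp x)
    cases f; cases hF : F 0; simp_all
  have h1 : F 1 = g := by
    have : (F 1).toFun = g.toFun := by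
      funext x
      exact (congrArg Subtype.val (H.apply_one (clamp x))).trans (g.apply_clamp x)
    cases g; cases hF : F 1; simp_all
  have hloc : IsLocallyConstant fun t => D (F t) := by
    rw [IsLocallyConstant.iff_eventually_eq]
    intro t
    obtain ⟨ε, hε, hd⟩ := hD (F t)
    let K : C(I × (I^(Fin 3)), ℍ[ℝ]) := ⟨fun z => (H z : ℍ[ℝ]),
      continuous_subtype_val.comp H.continuous⟩
    have hc := Metric.tendsto_nhds.mp (K.curry.continuous.tendsto t) ε hε
    filter_upwards [hc] with s hs
    refine hd _ fun x => ?_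
    rw [← dist_eq_norm]
    exact (ContinuousMap.dist_apply_le_dist (f := K.curry s) (g := K.curry t) (clamp x)).trans_lt hs
  have := hloc.apply_eq_of_preconnectedSpace 0 1
  rwa [h0, h1] at this

/-- Pointwise multiplication of quaternionic loops. -/
noncomputable instance : Mul QLoop := ⟨fun f g => ⟨fun x => f x * g x, f.continuous.mul g.continuous,
  fun x => mul_ne_zero (f.ne_zero x) (g.ne_zero x), fun x hx => by
    rw [f.eq_one hx, g.eq_one hx, mul_one]⟩⟩

noncomputable instance : One QLoop := ⟨⟨fun _ => 1, continuous_const, fun _ => one_ne_zero, fun _ _ => rfl⟩⟩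

/-- Pointwise inversion of quaternionic loops. -/
noncomputable instance : Inv QLoop := ⟨fun f => ⟨fun x => (f x)⁻¹, f.continuous.inv₀ f.ne_zero,
  fun x => inv_ne_zero (f.ne_zero x), fun x hx => by rw [f.eq_one hx, inv_one]⟩⟩

theorem mul_apply (f g : QLoop) (x) : (f * g) x = f x * g x := rfl

theorem ext {f g : QLoop} (h : ∀ x, f x = g x) : f = g := by
  cases f; cases g; congr; exact funext h

theorem cls_one : cls 1 = 1 := rfl

/-- Affine rescaling of the first coordinate. -/
noncomputable def stretch (a b : ℝ) (x : Fin 3 → ℝ) : Fin 3 → ℝ := Function.update x 0 (a * x 0 + b)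

theorem continuous_stretch {A : Type*} [TopologicalSpace A] {a b : A → ℝ} {x : A → Fin 3 → ℝ}
    (ha : Continuous a) (hb : Continuous b) (hx : Continuous x) :
    Continuous fun z => stretch (a z) (b z) (x z) := by
  unfold stretch
  exact hx.update 0 (by fun_prop)

theorem stretch_notMem {a b : ℝ} {x : Fin 3 → ℝ} (hb : b ≤ 0) (ha : 1 ≤ a + b)
    (hx : x ∉ openCube) : stretch a b x ∉ openCube := by
  intro h
  apply hx
  have ha0 : 0 < a := by linarith
  have h0 := h 0
  simp only [stretch, Function.update_self] at h0
  intro i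
  by_cases hi : i = 0
  · subst hi
    constructor
    · by_contra! hc
      nlinarith [h0.1, mul_nonneg ha0.le (neg_nonneg.mpr hc)]
    · by_contra! hc
      nlinarith [h0.2]
  · have := h i
    simpa [stretch, hi] using this

/-- The rescaling of a loop in the first coordinate. -/
noncomputable def rescale (a b : ℝ) (hb : b ≤ 0) (ha : 1 ≤ a + b) (f : QLoop) : QLoop :=
  ⟨fun x => f (stretch a b x), f.continuous.comp (continuous_stretch continuous_const
    continuous_const continuous_id), fun _ => f.ne_zero _, fun _ hx =>
      f.eq_one (stretch_notMem hb ha hx)⟩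

theorem rescale_apply (a b : ℝ) (hb : b ≤ 0) (ha : 1 ≤ a + b) (f : QLoop) (x) :
    rescale a b hb ha f x = f (stretch a b x) := rfl

theorem stretch_one_zero (x) : stretch 1 0 x = x := by
  simp [stretch]

theorem cls_rescale (a b : ℝ) (hb : b ≤ 0) (ha : 1 ≤ a + b) (f : QLoop) :
    cls (rescale a b hb ha f) = cls f := by
  symm
  refine cls_eq_of_homotopy (fun z => f (stretch (1 + z.1 * (a - 1)) (z.1 * b) z.2))
    (f.continuous.comp (continuous_stretch (by fun_prop) (by fun_prop) (by fun_prop)))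
    (fun _ _ _ => f.ne_zero _) (fun t ht x hx => f.eq_one (stretch_notMem ?_ ?_ hx)) ?_ ?_
  · exact mul_nonpos_of_nonneg_of_nonpos ht.1 hb
  · nlinarith [ht.1]
  · intro x; simp [stretch_one_zero]
  · intro x; simp [rescale_apply]

/-- The first half of a concatenation. -/
noncomputable def firstHalf (f : QLoop) : QLoop := rescale 2 0 le_rfl (by norm_num) f

/-- The second half of a concatenation. -/
noncomputable def secondHalf (f : QLoop) : QLoop := rescale 2 (-1) (by norm_num) (by norm_num) f

theorem cls_mul_halves (f g : QLoop) : cls (firstHalf f * secondHalf g) = cls g * cls f := by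
  refine Eq.trans ?_ (HomotopyGroup.mul_spec (i := 0) (p := g.genLoop) (q := f.genLoop)).symm
  refine congrArg (Quotient.mk _) (Subtype.ext (ContinuousMap.ext fun y => Subtype.ext ?_))
  change firstHalf f (fun i => y i) * secondHalf g (fun i => y i) =
    (GenLoop.transAt 0 f.genLoop g.genLoop y : ℍ[ℝ])
  simp only [GenLoop.transAt, GenLoop.coe_copy, firstHalf, secondHalf, rescale_apply]
  have key : ∀ (h : QLoop) (a b : ℝ) , a * y 0 + b ∈ Set.Icc (0 : ℝ) 1 →
      h (stretch a b fun i => y i) =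
      h.genLoop (Function.update y 0 (Set.projIcc 0 1 zero_le_one (a * y 0 + b))) := by
    intro h a b hab
    rw [coe_genLoop]
    congr 1
    funext i
    by_cases hi : i = 0
    · subst hi; simp [stretch, Set.projIcc_of_mem zero_le_one hab]
    · simp [stretch, hi]
  have hy0 := (y 0).2.1
  have hy1 := (y 0).2.2
  split_ifs with hy
  · rw [key f 2 0 (by constructor <;> linarith), g.eq_one, mul_one]
    · simp
    · intro h
      have := (h 0).1
      simp [stretch] at this
      linarith
  · rw [key g 2 (-1) (by constructor <;> linarith), f.eq_one, one_mul]
    · simp [sub_eq_add_neg]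
    · intro h
      have := (h 0).2
      simp [stretch] at this
      linarith

theorem cls_mul_congr {f f' g g' : QLoop} (hf : cls f = cls f') (hg : cls g = cls g') :
    cls (f * g) = cls (f' * g') := by
  obtain ⟨⟨H⟩, ⟨K⟩⟩ : GenLoop.Homotopic f.genLoop f'.genLoop ∧ GenLoop.Homotopic g.genLoop g'.genLoop :=
    ⟨Quotient.exact hf, Quotient.exact hg⟩
  refine Quotient.sound (s := GenLoop.Homotopic.setoid _ _) <| NonzeroQuaternion.homotopic_of
    ⟨fun z => (H z : ℍ[ℝ]) * K z, by
      exact (continuous_subtype_val.comp H.continuous).mul (continuous_subtype_val.comp K.continuous)⟩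
    (fun z => mul_ne_zero (H z).2 (K z).2) ?_ ?_ ?_
  · intro y
    exact congrArg₂ (· * ·) (congrArg Subtype.val (H.apply_zero y)) (congrArg Subtype.val (K.apply_zero y))
  · intro y
    exact congrArg₂ (· * ·) (congrArg Subtype.val (H.apply_one y)) (congrArg Subtype.val (K.apply_one y))
  · intro t y hy
    have e1 := (congrArg Subtype.val ((H.prop' t y hy).trans (f.genLoop.2 y hy)))
    have e2 := (congrArg Subtype.val ((K.prop' t y hy).trans (g.genLoop.2 y hy)))
    exact (congrArg₂ (· * ·) e1 e2).trans (mul_one _)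

theorem cls_mul (f g : QLoop) : cls (f * g) = cls f * cls g := by
  rw [mul_comm, ← cls_mul_halves]
  exact cls_mul_congr (cls_rescale _ _ _ _ f).symm (cls_rescale _ _ _ _ g).symm

theorem cls_inv (f : QLoop) : cls f⁻¹ = (cls f)⁻¹ := by
  rw [eq_inv_iff_mul_eq_one, ← cls_mul, ← cls_one]
  congr 1
  exact ext fun x => inv_mul_cancel₀ (f.ne_zero x)

end QLoop

/-- The set of invertible real `3 × 3` matrices. -/
def invertibleMatrices : Set (Matrix (Fin 3) (Fin 3) ℝ) := {M | M.det ≠ 0}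

theorem joinedIn_mul {A A' B B' : Matrix (Fin 3) (Fin 3) ℝ} (hA : JoinedIn invertibleMatrices A A')
    (hB : JoinedIn invertibleMatrices B B') : JoinedIn invertibleMatrices (A * B) (A' * B') := by
  obtain ⟨γ, hγ⟩ := hA
  obtain ⟨δ, hδ⟩ := hB
  refine ⟨⟨⟨fun t => γ t * δ t, γ.continuous.matrix_mul δ.continuous⟩, by simp, by simp⟩,
    fun t => ?_⟩
  change (γ t * δ t).det ≠ 0
  rw [Matrix.det_mul]
  exact mul_ne_zero (hγ t) (hδ t)

theorem joinedIn_of_continuous {A B : Matrix (Fin 3) (Fin 3) ℝ} (φ : ℝ → Matrix (Fin 3) (Fin 3) ℝ)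
    (hφ : Continuous φ) (h0 : φ 0 = A) (h1 : φ 1 = B) (h : ∀ t ∈ Set.Icc (0 : ℝ) 1, (φ t).det ≠ 0) :
    JoinedIn invertibleMatrices A B :=
  ⟨⟨⟨fun t => φ t, by fun_prop⟩, by simpa, by simpa⟩, fun t => h t t.2⟩

theorem joinedIn_refl {A : Matrix (Fin 3) (Fin 3) ℝ} (h : A.det ≠ 0) :
    JoinedIn invertibleMatrices A A := JoinedIn.refl h

theorem joinedIn_diagonal_two (i : Fin 3) :
    JoinedIn invertibleMatrices (Matrix.diagonal fun j => if j = i then 1 else -1) 1 := by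
  symm
  fin_cases i
  · refine joinedIn_of_continuous (fun t => !![1, 0, 0; 0, Real.cos (Real.pi * t),
      -Real.sin (Real.pi * t); 0, Real.sin (Real.pi * t), Real.cos (Real.pi * t)]) ?_ ?_ ?_ ?_
    · refine continuous_matrix fun a b => ?_
      fin_cases a <;> fin_cases b <;> simp <;> fun_prop
    · ext a b; fin_cases a <;> fin_cases b <;> simp
    · ext a b; fin_cases a <;> fin_cases b <;> simp
    · intro t _
      simp [Matrix.det_fin_three]
      nlinarith [Real.sin_sq_add_cos_sq (Real.pi * t)]
  · refine joinedIn_of_continuous (fun t => !![Real.cos (Real.pi * t), 0, -Real.sin (Real.pi * t);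
      0, 1, 0; Real.sin (Real.pi * t), 0, Real.cos (Real.pi * t)]) ?_ ?_ ?_ ?_
    · refine continuous_matrix fun a b => ?_
      fin_cases a <;> fin_cases b <;> simp <;> fun_prop
    · ext a b; fin_cases a <;> fin_cases b <;> simp
    · ext a b; fin_cases a <;> fin_cases b <;> simp
    · intro t _
      simp [Matrix.det_fin_three]
      nlinarith [Real.sin_sq_add_cos_sq (Real.pi * t)]
  · refine joinedIn_of_continuous (fun t => !![Real.cos (Real.pi * t), -Real.sin (Real.pi * t), 0;
      Real.sin (Real.pi * t), Real.cos (Real.pi * t), 0; 0, 0, 1]) ?_ ?_ ?_ ?_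
    · refine continuous_matrix fun a b => ?_
      fin_cases a <;> fin_cases b <;> simp <;> fun_prop
    · ext a b; fin_cases a <;> fin_cases b <;> simp
    · ext a b; fin_cases a <;> fin_cases b <;> simp
    · intro t _
      simp [Matrix.det_fin_three]
      nlinarith [Real.sin_sq_add_cos_sq (Real.pi * t)]

theorem joinedIn_signs (s : Fin 3 → ℝ) (hs : ∀ i, s i = 1 ∨ s i = -1) :
    JoinedIn invertibleMatrices (Matrix.diagonal s) 1 ∨
      JoinedIn invertibleMatrices (Matrix.diagonal s) (-1) := by
  have hdet : (-1 : Matrix (Fin 3) (Fin 3) ℝ).det ≠ 0 := by simp [Matrix.det_neg]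
  have hneg : ∀ i : Fin 3, JoinedIn invertibleMatrices
      (Matrix.diagonal fun j => if j = i then -1 else 1) (-1) := by
    intro i
    have := joinedIn_mul (joinedIn_refl hdet) (joinedIn_diagonal_two i)
    rw [mul_one] at this
    convert this using 1
    ext a b
    by_cases h : a = b <;> by_cases h' : a = i <;> simp_all
  have key : s = (fun _ => 1) ∨ s = (fun _ => -1) ∨
      (∃ i, s = fun j => if j = i then 1 else -1) ∨ ∃ i, s = fun j => if j = i then -1 else 1 := by
    rcases hs 0 with h0 | h0 <;> rcases hs 1 with h1 | h1 <;> rcases hs 2 with h2 | h2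
    · left; funext i; fin_cases i <;> simpa
    · right; right; right; refine ⟨2, ?_⟩; funext i; fin_cases i <;> simpa
    · right; right; right; refine ⟨1, ?_⟩; funext i; fin_cases i <;> simpa
    · right; right; left; refine ⟨0, ?_⟩; funext i; fin_cases i <;> simpa
    · right; right; right; refine ⟨0, ?_⟩; funext i; fin_cases i <;> simpa
    · right; right; left; refine ⟨1, ?_⟩; funext i; fin_cases i <;> simpa
    · right; right; left; refine ⟨2, ?_⟩; funext i; fin_cases i <;> simpa
    · right; left; funext i; fin_cases i <;> simpa
  rcases key with rfl | rfl | ⟨i, rfl⟩ | ⟨i, rfl⟩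
  · left; rw [Matrix.diagonal_one]; exact joinedIn_refl (by simp)
  · right
    have : (Matrix.diagonal fun _ : Fin 3 => (-1 : ℝ)) = -1 := by
      ext a b; by_cases h : a = b <;> simp [h]
    rw [this]; exact joinedIn_refl hdet
  · exact Or.inl (joinedIn_diagonal_two i)
  · exact Or.inr (hneg i)

theorem joinedIn_diagonal_sign (d : Fin 3 → ℝ) (hd : ∀ i, d i ≠ 0) :
    JoinedIn invertibleMatrices (Matrix.diagonal d)
      (Matrix.diagonal fun i => if 0 < d i then (1 : ℝ) else -1) := by
  refine joinedIn_of_continuous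
    (fun t => Matrix.diagonal fun i => (1 - t) * d i + t * if 0 < d i then (1 : ℝ) else -1)
    ?_ ?_ ?_ ?_
  · exact Continuous.matrix_diagonal (by fun_prop)
  · simp
  · simp
  · intro t ht
    rw [Matrix.det_diagonal, Finset.prod_ne_zero_iff]
    intro i _
    split_ifs with h
    · rcases ht.2.eq_or_lt with rfl | h1
      · simp
      · have := mul_pos (sub_pos.mpr h1) h
        have := ht.1
        simp only [mul_one]; exact ne_of_gt (by linarith)
    · have h := lt_of_le_of_ne (not_lt.mp h) (hd i)
      rcases ht.2.eq_or_lt with rfl | h1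
      · simp
      · have := mul_neg_of_pos_of_neg (sub_pos.mpr h1) h
        have := ht.1
        exact ne_of_lt (by linarith)

/-- The invertible real `3 × 3` matrices have at most two path components. -/
theorem joinedIn_one_or_neg_one (B : Matrix (Fin 3) (Fin 3) ℝ) (hB : B.det ≠ 0) :
    JoinedIn invertibleMatrices B 1 ∨ JoinedIn invertibleMatrices B (-1) := by
  refine Matrix.diagonal_transvection_induction_of_det_ne_zero (fun B => JoinedIn invertibleMatrices
    B 1 ∨ JoinedIn invertibleMatrices B (-1)) B hB ?_ ?_ ?_
  · intro D hD
    have hD' : ∀ i, D i ≠ 0 := by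
      rw [Matrix.det_diagonal, Finset.prod_ne_zero_iff] at hD
      exact fun i => hD i (Finset.mem_univ i)
    have h := joinedIn_diagonal_sign D hD'
    exact (joinedIn_signs _ fun i => by by_cases h : 0 < D i <;> simp [h]).imp h.trans h.trans
  · intro t
    left
    refine JoinedIn.symm (joinedIn_of_continuous (fun s => Matrix.transvection t.i t.j (s * t.c)) ?_ ?_ ?_ ?_)
    · unfold Matrix.transvection
      refine continuous_const.add ?_
      refine continuous_matrix fun a b => ?_
      simp only [Matrix.single_apply]
      split_ifs <;> fun_prop
    · simp
    · simp [Matrix.TransvectionStruct.toMatrix]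
    · intro s _
      rw [Matrix.det_transvection_of_ne _ _ t.hij]
      exact one_ne_zero
  · rintro A B _ _ (hA | hA) (hB | hB)
    · left; simpa using joinedIn_mul hA hB
    · right; simpa using joinedIn_mul hA hB
    · right; simpa using joinedIn_mul hA hB
    · left; simpa using joinedIn_mul hA hB

/-- The sum of squares of the coordinates. -/
noncomputable def sumSq (z : Fin 3 → ℝ) : ℝ := z 0 ^ 2 + z 1 ^ 2 + z 2 ^ 2

theorem sumSq_nonneg (z) : 0 ≤ sumSq z := by unfold sumSq; positivity

theorem sumSq_eq_zero {z} (h : sumSq z = 0) : z = 0 := by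
  unfold sumSq at h
  have h0 : z 0 = 0 := by nlinarith [sq_nonneg (z 0), sq_nonneg (z 1), sq_nonneg (z 2)]
  have h1 : z 1 = 0 := by nlinarith [sq_nonneg (z 0), sq_nonneg (z 1), sq_nonneg (z 2)]
  have h2 : z 2 = 0 := by nlinarith [sq_nonneg (z 0), sq_nonneg (z 1), sq_nonneg (z 2)]
  funext i; fin_cases i <;> simpa

theorem abs_lt_of_sumSq_lt {z : Fin 3 → ℝ} {ε : ℝ} (hε : 0 < ε) (h : sumSq z < ε ^ 2) (i) :
    |z i| < ε := by
  apply abs_lt_of_sq_lt_sq _ hε.le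
  unfold sumSq at h
  fin_cases i <;> simp <;> nlinarith [sq_nonneg (z 0), sq_nonneg (z 1), sq_nonneg (z 2)]

theorem continuous_sumSq : Continuous sumSq := by unfold sumSq; fun_prop

theorem sumSq_neg (z) : sumSq (-z) = sumSq z := by simp [sumSq]

/-- The quaternion with given coordinates. -/
def mkQ (a b c d : ℝ) : ℍ[ℝ] := ⟨a, b, c, d⟩

@[simp] theorem mkQ_re (a b c d) : (mkQ a b c d).re = a := rfl
@[simp] theorem mkQ_imI (a b c d) : (mkQ a b c d).imI = b := rfl
@[simp] theorem mkQ_imJ (a b c d) : (mkQ a b c d).imJ = c := rfl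
@[simp] theorem mkQ_imK (a b c d) : (mkQ a b c d).imK = d := rfl

theorem mkQ_eq (a b c d) : mkQ a b c d = QTilde.coords.symm (!₂[a, b, c, d]) := by
  rw [QTilde.coords, Quaternion.linearIsometryEquivTuple_symm_apply]; rfl

theorem continuous_mkQ {A : Type*} [TopologicalSpace A] {a b c d : A → ℝ}
    (ha : Continuous a) (hb : Continuous b) (hc : Continuous c) (hd : Continuous d) :
    Continuous fun x => mkQ (a x) (b x) (c x) (d x) := by
  simp only [mkQ_eq]
  refine QTilde.coords.symm.continuous.comp ?_
  refine (PiLp.continuous_toLp 2 _).comp (continuous_pi fun i => ?_)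
  fin_cases i <;> simpa

/-- The quaternion `(w - m) (m - w)`, for `w` imaginary. -/
noncomputable def core (m : ℝ) (w : Fin 3 → ℝ) : ℍ[ℝ] :=
  mkQ (sumSq w - m ^ 2) (2 * m * w 0) (2 * m * w 1) (2 * m * w 2)

theorem core_mul_core_neg (m : ℝ) (w) :
    core m w * core m (-w) = (((sumSq w + m ^ 2) ^ 2 : ℝ) : ℍ[ℝ]) := by
  ext <;> simp only [core, sumSq, Quaternion.re_mul, Quaternion.imI_mul, Quaternion.imJ_mul,
    Quaternion.imK_mul, mkQ_re, mkQ_imI, mkQ_imJ, mkQ_imK, Quaternion.re_coe, Quaternion.imI_coe,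
    Quaternion.imJ_coe, Quaternion.imK_coe, Pi.neg_apply] <;> ring

theorem core_zero (w) : core 0 w = ((sumSq w : ℝ) : ℍ[ℝ]) := by
  ext <;> simp [core]

/-- The smooth bump function at the origin of radius `ε`. -/
noncomputable def bump (ε : ℝ) (z : Fin 3 → ℝ) : ℝ := Real.smoothTransition (1 - sumSq z / ε ^ 2)

theorem bump_nonneg (ε z) : 0 ≤ bump ε z := Real.smoothTransition.nonneg _

theorem bump_zero (ε) : bump ε 0 = 1 := by simp [bump, sumSq]

theorem bump_eq_zero {ε : ℝ} (hε : 0 < ε) {z} (h : ε ^ 2 ≤ sumSq z) : bump ε z = 0 := by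
  apply Real.smoothTransition.zero_of_nonpos
  rw [sub_nonpos, one_le_div (by positivity)]
  exact h

/-- The standard local loop of shape `B` near `p`. -/
noncomputable def gammaFun (p : Fin 3 → ℝ) (ε : ℝ) (B : Matrix (Fin 3) (Fin 3) ℝ)
    (x : Fin 3 → ℝ) : ℍ[ℝ] :=
  (sumSq (B.mulVec (x - p)) + bump ε (x - p) ^ 2)⁻¹ • core (bump ε (x - p)) (B.mulVec (x - p))

/-- The ball of radius `ε` around `p` lies in the open unit cube. -/
def Adm (p : Fin 3 → ℝ) (ε : ℝ) : Prop := 0 < ε ∧ ∀ i, ε ≤ p i ∧ ε ≤ 1 - p i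

theorem denom_pos {B : Matrix (Fin 3) (Fin 3) ℝ} (hB : B.det ≠ 0) (ε : ℝ) (z) :
    0 < sumSq (B.mulVec z) + bump ε z ^ 2 := by
  have h0 := sumSq_nonneg (B.mulVec z)
  have h1 := sq_nonneg (bump ε z)
  refine lt_of_le_of_ne (by positivity) fun h => ?_
  have hz : z = 0 := Matrix.eq_zero_of_mulVec_eq_zero hB (sumSq_eq_zero (by linarith))
  rw [hz, bump_zero, ← hz] at h
  linarith

theorem gammaFun_mul_neg (p ε) {B : Matrix (Fin 3) (Fin 3) ℝ} (hB : B.det ≠ 0) (x) :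
    gammaFun p ε B x * gammaFun p ε (-B) x = 1 := by
  have h := (denom_pos hB ε (x - p)).ne'
  rw [gammaFun, gammaFun, Matrix.neg_mulVec, sumSq_neg, smul_mul_smul_comm, core_mul_core_neg]
  set N := sumSq (B.mulVec (x - p)) + bump ε (x - p) ^ 2
  rw [← Quaternion.coe_smul, smul_eq_mul, show N⁻¹ * N⁻¹ * N ^ 2 = 1 by field_simp]
  simp

theorem gammaFun_eq_one {p ε} (hε : 0 < ε) {B : Matrix (Fin 3) (Fin 3) ℝ} (hB : B.det ≠ 0) {x}
    (hx : ε ^ 2 ≤ sumSq (x - p)) : gammaFun p ε B x = 1 := by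
  have h := (denom_pos hB ε (x - p)).ne'
  rw [gammaFun]
  rw [bump_eq_zero hε hx] at h ⊢
  rw [core_zero, ← Quaternion.coe_smul]
  simp only [ne_eq, OfNat.ofNat_ne_zero, not_false_eq_true, zero_pow, add_zero, smul_eq_mul] at h ⊢
  rw [inv_mul_cancel₀ h]; simp

theorem le_sumSq_of_notMem {p ε} (h : Adm p ε) {x} (hx : x ∉ openCube) : ε ^ 2 ≤ sumSq (x - p) := by
  by_contra! hc
  refine hx fun i => ?_
  have h1 := abs_lt.mp (abs_lt_of_sumSq_lt h.1 hc i)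
  have h2 := h.2 i
  simp only [Pi.sub_apply] at h1
  constructor <;> linarith

theorem continuous_bump {A : Type*} [TopologicalSpace A] {ε : A → ℝ} {z : A → Fin 3 → ℝ}
    (hε : Continuous ε) (hε0 : ∀ a, ε a ≠ 0) (hz : Continuous z) :
    Continuous fun a => bump (ε a) (z a) := by
  unfold bump
  refine Real.smoothTransition.continuous.comp ?_
  exact continuous_const.sub ((continuous_sumSq.comp hz).div (by fun_prop)
    (fun a => pow_ne_zero 2 (hε0 a)))

theorem continuous_gammaFun {A : Type*} [TopologicalSpace A] {ε : A → ℝ} {p x : A → Fin 3 → ℝ}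
    {B : A → Matrix (Fin 3) (Fin 3) ℝ}
    (hε : Continuous ε) (hε0 : ∀ a, ε a ≠ 0) (hp : Continuous p) (hx : Continuous x)
    (hB : Continuous B) (hB0 : ∀ a, (B a).det ≠ 0) :
    Continuous fun a => gammaFun (p a) (ε a) (B a) (x a) := by
  unfold gammaFun
  have hm := continuous_bump hε hε0 (hx.sub hp)
  have hw : Continuous fun a => (B a).mulVec (x a - p a) := hB.matrix_mulVec (hx.sub hp)
  have hs := continuous_sumSq.comp hw
  simp only [Function.comp_def] at hs
  refine Continuous.smul (Continuous.inv₀ (by fun_prop) fun a => (denom_pos (hB0 a) _ _).ne') ?_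
  unfold core
  exact continuous_mkQ (by fun_prop) (by fun_prop) (by fun_prop) (by fun_prop)

namespace QLoop

/-- The standard local loop of shape `B` near `p`. -/
noncomputable def gamma (p ε) (h : Adm p ε) (B : Matrix (Fin 3) (Fin 3) ℝ) (hB : B.det ≠ 0) :
    QLoop :=
  ⟨gammaFun p ε B, continuous_gammaFun continuous_const (fun _ => h.1.ne') continuous_const
    continuous_id continuous_const (fun _ => hB), fun x h0 => by
      have := gammaFun_mul_neg p ε hB x
      rw [h0, zero_mul] at this
      exact zero_ne_one this,
    fun _ hx => gammaFun_eq_one h.1 hB (le_sumSq_of_notMem h hx)⟩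

theorem gamma_apply (p ε) (h : Adm p ε) (B : Matrix (Fin 3) (Fin 3) ℝ) (hB : B.det ≠ 0) (x) :
    gamma p ε h B hB x = gammaFun p ε B x := rfl

theorem adm_half : Adm (fun _ => 1 / 2) (1 / 2) := ⟨by norm_num, fun _ => by norm_num⟩

/-- The generating loop. -/
noncomputable def generator : QLoop := gamma _ _ adm_half 1 (by simp)

theorem cls_gamma_move {p ε} (h : Adm p ε) {q δ} (h' : Adm q δ) (B : Matrix (Fin 3) (Fin 3) ℝ)
    (hB : B.det ≠ 0) : cls (gamma p ε h B hB) = cls (gamma q δ h' B hB) := by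
  let c : ℝ → ℝ := fun t => max 0 (min 1 t)
  have hc0 : ∀ t, 0 ≤ c t := fun t => le_max_left _ _
  have hc1 : ∀ t, c t ≤ 1 := fun t => max_le zero_le_one (min_le_left _ _)
  have hcc : Continuous c := by fun_prop
  have hadm : ∀ t, Adm ((1 - c t) • p + c t • q) ((1 - c t) * ε + c t * δ) := by
    intro t
    have a0 := hc0 t
    have a1 := hc1 t
    refine ⟨?_, fun i => ?_⟩
    · rcases a1.eq_or_lt with e | e
      · rw [e]; simpa using h'.1
      · nlinarith [h.1, h'.1, mul_pos (sub_pos.mpr e) h.1, mul_nonneg a0 h'.1.le]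
    · have b1 := h.2 i
      have b2 := h'.2 i
      simp only [Pi.add_apply, Pi.smul_apply, smul_eq_mul]
      constructor <;> nlinarith
  refine cls_eq_of_homotopy (fun z => gammaFun ((1 - c z.1) • p + c z.1 • q)
    ((1 - c z.1) * ε + c z.1 * δ) B z.2) ?_ ?_ ?_ ?_ ?_
  · exact continuous_gammaFun (by fun_prop) (fun z => (hadm z.1).1.ne') (by fun_prop) (by fun_prop)
      continuous_const fun _ => hB
  · exact fun t _ x => (gamma _ _ (hadm t) B hB).ne_zero x
  · exact fun t _ x hx => (gamma _ _ (hadm t) B hB).eq_one hx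
  · intro x; simp [c, gamma_apply]
  · intro x; simp [c, gamma_apply]

theorem cls_gamma_joined {p ε} (h : Adm p ε) {B B' : Matrix (Fin 3) (Fin 3) ℝ}
    (hB : B.det ≠ 0) (hB' : B'.det ≠ 0) (hJ : JoinedIn invertibleMatrices B B') :
    cls (gamma p ε h B hB) = cls (gamma p ε h B' hB') := by
  obtain ⟨γ, hγ⟩ := hJ
  have hγ' : ∀ t, (γ.extend t).det ≠ 0 := fun t => hγ _
  refine cls_eq_of_homotopy (fun z => gammaFun p ε (γ.extend z.1) z.2) ?_ ?_ ?_ ?_ ?_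
  · exact continuous_gammaFun continuous_const (fun _ => h.1.ne') continuous_const continuous_snd
      (γ.continuous_extend.comp continuous_fst) fun _ => hγ' _
  · exact fun t _ x => (gamma _ _ h _ (hγ' t)).ne_zero x
  · exact fun t _ x hx => (gamma _ _ h _ (hγ' t)).eq_one hx
  · intro x; simp [gamma_apply]
  · intro x; simp [gamma_apply]

theorem cls_gamma_mem {p ε} (h : Adm p ε) {B : Matrix (Fin 3) (Fin 3) ℝ} (hB : B.det ≠ 0) :
    cls (gamma p ε h B hB) ∈ Subgroup.zpowers (cls generator) := by
  rw [cls_gamma_move h adm_half]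
  have h1 : (1 : Matrix (Fin 3) (Fin 3) ℝ).det ≠ 0 := by simp
  have hneg : (-1 : Matrix (Fin 3) (Fin 3) ℝ).det ≠ 0 := by simp [Matrix.det_neg]
  rcases joinedIn_one_or_neg_one B hB with hJ | hJ
  · rw [cls_gamma_joined adm_half hB h1 hJ]
    exact Subgroup.mem_zpowers _
  · rw [cls_gamma_joined adm_half hB hneg hJ]
    have : gamma _ _ adm_half _ hneg = generator⁻¹ := ext fun x =>
      eq_inv_of_mul_eq_one_right (gammaFun_mul_neg _ _ h1 x)
    rw [this, cls_inv]
    exact inv_mem (Subgroup.mem_zpowers _)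

noncomputable instance : Monoid QLoop where
  mul_assoc f g h := ext fun x => mul_assoc (f x) (g x) (h x)
  one_mul f := ext fun x => one_mul (f x)
  mul_one f := ext fun x => mul_one (f x)

theorem prod_apply_eq_one {ι : Type*} (γ : ι → QLoop) (l : List ι) (x) (h : ∀ i ∈ l, γ i x = 1) :
    (l.map γ).prod x = 1 := by
  induction l with
  | nil => rfl
  | cons i l ih =>
    rw [List.map_cons, List.prod_cons, mul_apply, h i (by simp), one_mul]
    exact ih fun j hj => h j (by simp [hj])

theorem prod_apply_eq {ι : Type*} (γ : ι → QLoop) (l : List ι) (hl : l.Nodup) (x) {i} (hi : i ∈ l)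
    (h : ∀ j ∈ l, j ≠ i → γ j x = 1) : (l.map γ).prod x = γ i x := by
  induction l with
  | nil => simp at hi
  | cons j l ih =>
    rw [List.map_cons, List.prod_cons, mul_apply]
    rw [List.nodup_cons] at hl
    by_cases hij : j = i
    · subst hij
      rw [prod_apply_eq_one, mul_one]
      intro k hk
      exact h k (by simp [hk]) (fun e => hl.1 (e ▸ hk))
    · rw [h j (by simp) hij, one_mul]
      refine ih hl.2 ?_ fun k hk => h k (by simp [hk])
      rcases List.mem_cons.mp hi with e | e
      · exact absurd e.symm hij
      · exact e

theorem cls_prod_mem {ι : Type*} (γ : ι → QLoop) (l : List ι) (S : Subgroup (π_ 3 NonzeroQuaternion 1))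
    (h : ∀ i ∈ l, cls (γ i) ∈ S) : cls (l.map γ).prod ∈ S := by
  induction l with
  | nil => exact one_mem S
  | cons j l ih =>
    rw [List.map_cons, List.prod_cons, cls_mul]
    exact mul_mem (h j (by simp)) (ih fun i hi => h i (by simp [hi]))

theorem exists_norm_lower (f : QLoop) : ∃ δ > 0, ∀ x, δ ≤ ‖f x‖ := by
  have hc : Continuous fun y : I^(Fin 3) => ‖f fun i => y i‖ := (f.continuous.comp (by fun_prop)).norm
  obtain ⟨y, -, hy⟩ := isCompact_univ.exists_isMinOn Set.univ_nonempty hc.continuousOn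
  refine ⟨_, norm_pos_iff.mpr (f.ne_zero fun i => y i), fun x => ?_⟩
  rw [← f.apply_clamp x]
  exact hy (Set.mem_univ (clamp x))

theorem cls_eq_of_close {f g : QLoop} (h : ∀ x, ‖g x - f x‖ < ‖f x‖) : cls f = cls g := by
  refine cls_eq_of_segment fun t ht x h0 => ?_
  have e : f x = t • (f x - g x) := by
    rw [← sub_eq_zero, ← h0]; module
  have h1 : ‖f x‖ ≤ ‖f x - g x‖ := by
    conv_lhs => rw [e]
    rw [norm_smul, Real.norm_of_nonneg ht.1]
    exact mul_le_of_le_one_left (norm_nonneg _) ht.2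
  rw [norm_sub_rev] at h1
  exact absurd (h x) (not_lt.mpr h1)

theorem exists_smooth_approx (f : QLoop) {ε : ℝ} (hε : 0 < ε) :
    ∃ g : QLoop, ContDiff ℝ 2 g ∧ ∀ x, ‖g x - f x‖ < ε := by
  obtain ⟨δ, hδ, hf⟩ := f.exists_norm_lower
  obtain ⟨k, hk, hd, hs⟩ := Continuous.exists_contDiff_approx (n := 2)
    (f := fun x => f x - 1) (ε := fun _ => min ε δ) (f.continuous.sub continuous_const)
    continuous_const (fun _ => lt_min hε hδ)
  have hd' : ∀ x, ‖(k x + 1) - f x‖ < min ε δ := fun x => by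
    have := hd x
    rw [dist_eq_norm] at this
    rwa [← sub_add, sub_add_eq_add_sub] at this
  refine ⟨⟨fun x => k x + 1, hk.continuous.add continuous_const, fun x h0 => ?_, fun x hx => ?_⟩,
    hk.add contDiff_const, fun x => (hd' x).trans_le (min_le_left _ _)⟩
  · have := (hd' x).trans_le (min_le_right _ _)
    rw [h0, zero_sub, norm_neg] at this
    exact absurd (hf x) (not_le.mpr this)
  · have : k x = 0 := by
      by_contra h
      exact hs h (by simp [f.eq_one hx])
    simp [this]

end QLoop

theorem exists_dist_lt_forall_ne {E : Type*} [NormedAddCommGroup E] [NormedSpace ℝ E]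
    {y : E → E} {A : E →L[ℝ] E} {p : E} (hy : HasFDerivAt y A p)
    {K : ℝ} (hK : 0 < K) (hA : ∀ z, ‖z‖ ≤ K * ‖A z‖) :
    ∃ r > 0, ∀ x, dist x p < r → x ≠ p → ∀ μ : ℝ, 0 ≤ μ → y x - y p ≠ -(μ • A (x - p)) := by
  have h := hy.isLittleO.def (c := (2 * K)⁻¹) (by positivity)
  obtain ⟨r, hr, hb⟩ := Metric.eventually_nhds_iff.mp h
  refine ⟨r, hr, fun x hx hne μ hμ e => hne ?_⟩
  have h1 := hb hx
  rw [e, show -(μ • A (x - p)) - A (x - p) = -((1 + μ) • A (x - p)) by module, norm_neg, norm_smul,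
    Real.norm_of_nonneg (by linarith)] at h1
  have h2 := hA (x - p)
  have h3 : (2 * K)⁻¹ * ‖x - p‖ ≤ 2⁻¹ * ‖A (x - p)‖ := by
    rw [mul_inv, mul_assoc]
    refine mul_le_mul_of_nonneg_left ?_ (by norm_num)
    rwa [inv_mul_le_iff₀ hK]
  have h4 : ‖A (x - p)‖ = 0 := by
    nlinarith [norm_nonneg (A (x - p)), mul_nonneg hμ (norm_nonneg (A (x - p)))]
  rw [h4, mul_zero] at h2
  exact sub_eq_zero.mp (norm_le_zero_iff.mp h2)

/-- The real part, as a continuous linear map. -/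
noncomputable def reL : ℍ[ℝ] →L[ℝ] ℝ :=
  LinearMap.toContinuousLinearMap ⟨⟨fun q => q.re, fun _ _ => rfl⟩, fun _ _ => rfl⟩

/-- The imaginary part, as a continuous linear map. -/
noncomputable def imL : ℍ[ℝ] →L[ℝ] (Fin 3 → ℝ) :=
  LinearMap.toContinuousLinearMap ⟨⟨fun q => ![q.imI, q.imJ, q.imK], fun _ _ => by simp⟩,
    fun _ _ => by simp⟩

/-- The imaginary quaternion with given coordinates. -/
noncomputable def imQ (v : Fin 3 → ℝ) : ℍ[ℝ] := mkQ 0 (v 0) (v 1) (v 2)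

theorem reL_imQ (v) : reL (imQ v) = 0 := rfl

theorem imL_imQ (v) : imL (imQ v) = v := by
  funext i; fin_cases i <;> rfl

theorem eq_of_reL_imL {q q' : ℍ[ℝ]} (h : reL q = reL q') (h' : imL q = imL q') : q = q' := by
  have h0 := congrFun h' 0
  have h1 := congrFun h' 1
  have h2 := congrFun h' 2
  exact QuaternionAlgebra.ext h h0 h1 h2

theorem reL_core (m w) : reL (core m w) = sumSq w - m ^ 2 := rfl

theorem imL_core (m w) : imL (core m w) = (2 * m) • w := by
  funext i; fin_cases i <;> rfl

theorem reL_one : reL 1 = 1 := rfl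

theorem imL_one : imL 1 = 0 := by
  funext i; fin_cases i <;> rfl

theorem exists_notMem_critical {y : (Fin 3 → ℝ) → (Fin 3 → ℝ)} {W : Set (Fin 3 → ℝ)}
    (hy : ∀ x ∈ W, DifferentiableAt ℝ y x) :
    ∃ v, ∀ x ∈ W, y x = v → (fderiv ℝ y x).det ≠ 0 := by
  have h := MeasureTheory.addHaar_image_eq_zero_of_det_fderivWithin_eq_zero
    (MeasureTheory.volume : MeasureTheory.Measure (Fin 3 → ℝ))
    (s := {x | x ∈ W ∧ (fderiv ℝ y x).det = 0}) (f := y) (f' := fderiv ℝ y)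
    (fun x hx => (hy x hx.1).hasFDerivAt.hasFDerivWithinAt) (fun x hx => hx.2)
  obtain ⟨v, hv⟩ : ∃ v, v ∉ y '' {x | x ∈ W ∧ (fderiv ℝ y x).det = 0} := by
    by_contra! hc
    rw [Set.eq_univ_of_forall hc] at h
    simp at h
  exact ⟨v, fun x hx hxv h0 => hv ⟨x, ⟨hx, h0⟩, hxv⟩⟩

theorem exists_norm_le_of_det_ne_zero {A : (Fin 3 → ℝ) →L[ℝ] (Fin 3 → ℝ)} (hA : A.det ≠ 0) :
    ∃ K > 0, ∀ z, ‖z‖ ≤ K * ‖A z‖ := by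
  have hker : (A : (Fin 3 → ℝ) →ₗ[ℝ] (Fin 3 → ℝ)).ker = ⊥ := by
    by_contra hc
    exact hA (LinearMap.det_eq_zero_iff_ker_ne_bot.mpr hc)
  obtain ⟨K, hK, h⟩ := LinearMap.exists_antilipschitzWith _ hker
  refine ⟨K, by exact_mod_cast hK, fun z => ?_⟩
  have := h.le_mul_dist z 0
  simpa using this

namespace QLoop

/-- Shearing the imaginary part of a loop where its real part is negative. -/
noncomputable def shear (f : QLoop) (v : Fin 3 → ℝ) : QLoop :=
  ⟨fun x => f x - (min (reL (f x)) 0) • imQ v, by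
      have := f.continuous
      fun_prop,
    fun x h => by
      have h1 := congrArg reL h
      rw [map_sub, map_smul, reL_imQ, smul_zero, sub_zero, map_zero] at h1
      rw [h1, min_self, zero_smul, sub_zero] at h
      exact f.ne_zero x h,
    fun x hx => by
      rw [f.eq_one hx, reL_one, min_eq_right zero_le_one, zero_smul, sub_zero]⟩

theorem shear_apply (f : QLoop) (v x) : shear f v x = f x - (min (reL (f x)) 0) • imQ v := rfl

theorem cls_shear (f : QLoop) (v) : cls f = cls (shear f v) := by
  refine cls_eq_of_homotopy (fun z => shear f (z.1 • v) z.2) ?_ (fun t _ x => ne_zero _ x)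
    (fun t _ x hx => eq_one _ hx) ?_ ?_
  · simp only [shear_apply]
    have := f.continuous
    have h : Continuous fun z : ℝ × (Fin 3 → ℝ) => imQ (z.1 • v) :=
      continuous_mkQ continuous_const (by fun_prop) (by fun_prop) (by fun_prop)
    fun_prop
  · intro x
    have : imQ 0 = 0 := eq_of_reL_imL (reL_imQ 0) (by rw [imL_imQ, map_zero])
    simp [shear_apply, this]
  · intro x; simp

theorem reL_shear (f : QLoop) (v x) : reL (shear f v x) = reL (f x) := by
  rw [shear_apply, map_sub, map_smul, reL_imQ, smul_zero, sub_zero]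

theorem imL_shear (f : QLoop) (v) {x} (h : reL (f x) < 0) :
    imL (shear f v x) = reL (f x) • ((reL (f x))⁻¹ • imL (f x) - v) := by
  rw [shear_apply, map_sub, map_smul, imL_imQ, min_eq_left h.le, smul_sub, smul_smul,
    mul_inv_cancel₀ h.ne, one_smul]

theorem cls_mem_zpowers (f : QLoop) : cls f ∈ Subgroup.zpowers (cls generator) := by
  obtain ⟨δ, hδ, hf⟩ := f.exists_norm_lower
  obtain ⟨f₁, hsm, hd⟩ := f.exists_smooth_approx hδ
  rw [cls_eq_of_close fun x => (hd x).trans_le (hf x)]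
  clear hd hf hδ δ f
  rename QLoop => f
  set W : Set (Fin 3 → ℝ) := {x | reL (f x) < 0} with hW
  have hWo : IsOpen W := isOpen_lt (reL.continuous.comp f.continuous) continuous_const
  set y : (Fin 3 → ℝ) → (Fin 3 → ℝ) := fun x => (reL (f x))⁻¹ • imL (f x) with hydef
  have hfd : Differentiable ℝ f := hsm.differentiable (by norm_num)
  have hy : ∀ x ∈ W, DifferentiableAt ℝ y x := fun x hx =>
    ((reL.differentiable.comp hfd).differentiableAt.fun_inv (ne_of_lt hx)).fun_smul
      (imL.differentiable.comp hfd).differentiableAt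
  obtain ⟨v, hv⟩ := exists_notMem_critical hy
  set P : Set (Fin 3 → ℝ) := {x | x ∈ W ∧ y x = v} with hP
  set A := fderiv ℝ y with hAdef
  have hr : ∀ p ∈ P, ∃ r > 0, ∀ x, dist x p < r → x ∈ W ∧ (x ≠ p → ∀ μ : ℝ, 0 ≤ μ →
      y x - y p ≠ -(μ • A p (x - p))) := by
    rintro p ⟨hpW, hpv⟩
    obtain ⟨K, hK, hKA⟩ := exists_norm_le_of_det_ne_zero (hv p hpW hpv)
    obtain ⟨r, hr, h⟩ := exists_dist_lt_forall_ne (hy p hpW).hasFDerivAt hK hKA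
    obtain ⟨s, hs, hsW⟩ := Metric.isOpen_iff.mp hWo p hpW
    exact ⟨min r s, lt_min hr hs, fun x hx => ⟨hsW (hx.trans_le (min_le_right _ _)),
      h x (hx.trans_le (min_le_left _ _))⟩⟩
  have hPU : P ⊆ openCube := by
    rintro p ⟨hpW, -⟩
    by_contra hc
    rw [hW, Set.mem_ofPred_eq, f.eq_one hc, reL_one] at hpW
    linarith
  have hPfin : P.Finite := by
    by_contra hinf
    have hclosed : IsClosed P := by
      have : P = {x | reL (f x) ≤ 0} ∩ {x | imL (f x) = reL (f x) • v} := by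
        ext x
        constructor
        · rintro ⟨h1, h2⟩
          refine ⟨(le_of_lt h1 : reL (f x) ≤ 0), ?_⟩
          change imL (f x) = reL (f x) • v
          rw [← h2, hydef, smul_smul, mul_inv_cancel₀ (ne_of_lt h1), one_smul]
        · rintro ⟨h1, h2⟩
          have h1 : reL (f x) ≤ 0 := h1
          have h2 : imL (f x) = reL (f x) • v := h2
          have hne : reL (f x) ≠ 0 := fun h0 => f.ne_zero x
            (eq_of_reL_imL (by rw [h0, map_zero]) (by rw [h2, h0, zero_smul, map_zero]))
          refine ⟨lt_of_le_of_ne h1 hne, ?_⟩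
          rw [hydef]
          simp only [h2, smul_smul, inv_mul_cancel₀ hne, one_smul]
      rw [this]
      have h1 := reL.continuous.comp f.continuous
      have h2 := imL.continuous.comp f.continuous
      exact (isClosed_le h1 continuous_const).inter (isClosed_eq h2 (h1.smul continuous_const))
    have hcpt : IsCompact P := (isCompact_Icc (a := (0 : Fin 3 → ℝ)) (b := 1)).of_isClosed_subset
      hclosed fun x hx => ⟨fun i => (hPU hx i).1.le, fun i => (hPU hx i).2.le⟩
    obtain ⟨p, hp, hacc⟩ := Set.Infinite.exists_accPt_of_subset_isCompact hinf hcpt subset_rfl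
    obtain ⟨r, hr0, hr⟩ := hr p hp
    rw [accPt_iff_nhds] at hacc
    obtain ⟨x, ⟨hx1, hx2⟩, hne⟩ := hacc _ (Metric.ball_mem_nhds p hr0)
    refine (hr x hx1).2 hne 0 le_rfl ?_
    rw [hx2.2, hp.2]; simp
  choose! r hr0 hr using hr
  obtain ⟨ε, hε0, hε⟩ : ∃ ε > 0, ∀ p ∈ P, ε ≤ r p ∧ (∀ i, ε ≤ p i ∧ ε ≤ 1 - p i) ∧
      ∀ q ∈ P, q ≠ p → ε ≤ dist p q / 2 := by
    have hle : ∀ c : ℝ, 0 < c → ∀ᶠ ε in 𝓝[>] (0 : ℝ), ε ≤ c := fun c hc => by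
      filter_upwards [Ioo_mem_nhdsGT hc] with e he using he.2.le
    have : ∀ᶠ ε in 𝓝[>] (0 : ℝ), 0 < ε ∧ ∀ p ∈ P, ε ≤ r p ∧ (∀ i, ε ≤ p i ∧ ε ≤ 1 - p i) ∧
        ∀ q ∈ P, q ≠ p → ε ≤ dist p q / 2 := by
      refine Filter.Eventually.and self_mem_nhdsWithin ?_
      rw [Filter.eventually_all_finite hPfin]
      intro p hp
      refine (hle _ (hr0 p hp)).and (Filter.Eventually.and ?_ ?_)
      · rw [Filter.eventually_all]
        exact fun i => (hle _ (hPU hp i).1).and (hle _ (sub_pos.mpr (hPU hp i).2))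
      · rw [Filter.eventually_all_finite hPfin]
        intro q hq
        by_cases hqp : q = p
        · simp [hqp]
        · filter_upwards [hle _ (half_pos (dist_pos.mpr (Ne.symm hqp)))] with e he using fun _ => he
    exact this.exists
  have hadm : ∀ p ∈ P, Adm p ε := fun p hp => ⟨hε0, (hε p hp).2.1⟩
  let B : (Fin 3 → ℝ) → Matrix (Fin 3) (Fin 3) ℝ := fun p =>
    -(LinearMap.toMatrix' (A p : (Fin 3 → ℝ) →ₗ[ℝ] (Fin 3 → ℝ)))
  have hB : ∀ p ∈ P, (B p).det ≠ 0 := fun p hp => by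
    rw [Matrix.det_neg, LinearMap.det_toMatrix']
    exact mul_ne_zero (pow_ne_zero _ (by norm_num)) (hv p hp.1 hp.2)
  have hBv : ∀ p z, (B p).mulVec z = -(A p z) := fun p z => by
    simp only [B, Matrix.neg_mulVec, LinearMap.toMatrix'_mulVec]
    rfl
  classical
  let γ : (Fin 3 → ℝ) → QLoop := fun p =>
    if hp : p ∈ P then gamma p ε (hadm p hp) (B p) (hB p hp) else 1
  have hγ : ∀ p (hp : p ∈ P), γ p = gamma p ε (hadm p hp) (B p) (hB p hp) := fun p hp => dif_pos hp
  let l : List (Fin 3 → ℝ) := hPfin.toFinset.toList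
  have hl : ∀ p, p ∈ l ↔ p ∈ P := fun p => by simp [l]
  have hmem : cls (l.map γ).prod ∈ Subgroup.zpowers (cls generator) := by
    refine cls_prod_mem γ l _ fun p hp => ?_
    rw [hγ p ((hl p).mp hp)]
    exact cls_gamma_mem _ _
  rw [cls_shear f v]
  suffices h : cls (shear f v) = cls (l.map γ).prod by rwa [h]
  refine cls_eq_of_segment fun t ht x h0 => ?_
  have hre := congrArg reL h0
  have him := congrArg imL h0
  simp only [map_add, map_smul, map_zero, reL_shear, smul_eq_mul] at hre him
  by_cases hx : ∃ p ∈ P, sumSq (x - p) < ε ^ 2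
  · obtain ⟨p, hp, hxp⟩ := hx
    have hdist : ∀ q, sumSq (x - q) < ε ^ 2 → dist x q < ε := fun q hq =>
      (dist_pi_lt_iff hε0).mpr fun i => abs_lt_of_sumSq_lt hε0 hq i
    have hg : (l.map γ).prod x = gammaFun p ε (B p) x := by
      rw [prod_apply_eq γ l hPfin.toFinset.nodup_toList x ((hl p).mpr hp), hγ p hp]
      · rfl
      · intro q hq hqp
        have hq := (hl q).mp hq
        rw [hγ q hq, gamma_apply]
        refine gammaFun_eq_one hε0 (hB q hq) (not_lt.mp fun hc => ?_)
        have h1 := (hε p hp).2.2 q hq hqp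
        have h2 := dist_triangle_left p q x
        linarith [hdist p hxp, hdist q hc]
    obtain ⟨hxW, hxr⟩ := hr p hp x ((hdist p hxp).trans_le (hε p hp).1)
    have hN := denom_pos (hB p hp) ε (x - p)
    rw [hg, gammaFun, map_smul, reL_core, smul_eq_mul] at hre
    rw [hg, gammaFun, map_smul, imL_core, imL_shear f v hxW, hBv] at him
    have hxW' : reL (f x) < 0 := hxW
    by_cases hxe : x = p
    · rw [hxe, sub_self, Matrix.mulVec_zero, bump_zero] at hre
      rw [hxe] at hxW'
      simp [sumSq] at hre
      have ht0 : t = 0 := by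
        nlinarith [ht.1, mul_nonneg (sub_nonneg.mpr ht.2) (neg_nonneg.mpr hxW'.le)]
      rw [ht0] at hre
      linarith
    · have ht1 : t < 1 := by
        refine lt_of_le_of_ne ht.2 fun e => ?_
        rw [e] at h0
        simp only [sub_self, zero_smul, one_smul, zero_add] at h0
        exact ne_zero _ x h0
      have hb := bump_nonneg ε (x - p)
      rw [← hBv] at him
      set N := sumSq ((B p).mulVec (x - p)) + bump ε (x - p) ^ 2
      set m := bump ε (x - p)
      set a := reL (f x) with ha
      have h1t : 0 < 1 - t := by linarith
      refine hxr hxe (-(((1 - t) * a)⁻¹ * (t * N⁻¹ * (2 * m)))) ?_ ?_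
      · have h1 : ((1 - t) * a)⁻¹ < 0 := inv_lt_zero.mpr (mul_neg_of_pos_of_neg h1t hxW')
        have h2 : 0 ≤ t * N⁻¹ * (2 * m) := by have := ht.1; positivity
        nlinarith [mul_nonneg (neg_nonneg.mpr h1.le) h2]
      · have hne : (1 - t) * a ≠ 0 := mul_ne_zero h1t.ne' hxW'.ne
        have him' : ((1 - t) * a) • (y x - v) = (t * N⁻¹ * (2 * m)) • A p (x - p) := by
          have e : ((1 - t) * a) • (y x - v) - (t * N⁻¹ * (2 * m)) • A p (x - p) = 0 := by
            rw [← him, hBv]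
            simp only [hydef]
            module
          exact sub_eq_zero.mp e
        rw [hp.2, neg_smul, neg_neg, mul_smul, ← him', smul_smul, inv_mul_cancel₀ hne, one_smul]
  · push Not at hx
    have hg : (l.map γ).prod x = 1 := by
      refine prod_apply_eq_one γ l x fun q hq => ?_
      have hq := (hl q).mp hq
      rw [hγ q hq]
      exact gammaFun_eq_one hε0 (hB q hq) (hx q hq)
    rw [hg, reL_one, mul_one] at hre
    rw [hg, imL_one, smul_zero, add_zero] at him
    have h1t : 1 - t ≠ 0 := fun e => by rw [e] at hre; simp at hre; linarith
    have him' := (smul_eq_zero.mp him).resolve_left h1t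
    have hW0 : reL (f x) < 0 := by
      refine lt_of_le_of_ne (not_lt.mp fun hc => ?_) fun hc => ?_
      · have : 0 < 1 - t := lt_of_le_of_ne (by linarith [ht.2]) (Ne.symm h1t)
        nlinarith [ht.1, mul_pos this hc]
      · exact ne_zero (shear f v) x
          (eq_of_reL_imL (by rw [reL_shear, hc, map_zero]) (by rw [him', map_zero]))
    rw [imL_shear f v hW0] at him'
    have hxP : x ∈ P := ⟨hW0, sub_eq_zero.mp ((smul_eq_zero.mp him').resolve_left hW0.ne)⟩
    have := hx x hxP
    simp [sumSq] at this
    nlinarith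

end QLoop

/-- The determinant of four vectors, as a continuous multilinear map. -/
noncomputable def detMultilinear :
    ContinuousMultilinearMap ℝ (fun _ : Fin 4 => Fin 4 → ℝ) ℝ :=
  ⟨(Matrix.detRowAlternating (n := Fin 4) (R := ℝ)).toMultilinearMap,
    Continuous.matrix_det (A := fun v : Fin 4 → Fin 4 → ℝ => Matrix.of v) continuous_id⟩

/-- The determinant of four vectors of `ℝ⁴`. -/
noncomputable def detFour (a b c d : Fin 4 → ℝ) : ℝ := detMultilinear ![a, b, c, d]

theorem detFour_eq (a b c d : Fin 4 → ℝ) : detFour a b c d =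
    a 0 * (b 1 * (c 2 * d 3 - c 3 * d 2) - b 2 * (c 1 * d 3 - c 3 * d 1)
      + b 3 * (c 1 * d 2 - c 2 * d 1))
    - a 1 * (b 0 * (c 2 * d 3 - c 3 * d 2) - b 2 * (c 0 * d 3 - c 3 * d 0)
      + b 3 * (c 0 * d 2 - c 2 * d 0))
    + a 2 * (b 0 * (c 1 * d 3 - c 3 * d 1) - b 1 * (c 0 * d 3 - c 3 * d 0)
      + b 3 * (c 0 * d 1 - c 1 * d 0))
    - a 3 * (b 0 * (c 1 * d 2 - c 2 * d 1) - b 1 * (c 0 * d 2 - c 2 * d 0)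
      + b 2 * (c 0 * d 1 - c 1 * d 0)) := by
  change Matrix.det (Matrix.of ![a, b, c, d]) = _
  rw [Matrix.det_succ_row_zero, Fin.sum_univ_four]
  simp only [Matrix.det_fin_three, Matrix.submatrix_apply, Matrix.of_apply, Fin.succAbove,
    Fin.lt_def]
  simp
  ring

/-- The dot product on `ℝ⁴`. -/
def dotFour (a b : Fin 4 → ℝ) : ℝ := a 0 * b 0 + a 1 * b 1 + a 2 * b 2 + a 3 * b 3

theorem dotFour_self_pos {a : Fin 4 → ℝ} (ha : a ≠ 0) : 0 < dotFour a a := by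
  obtain ⟨i, hi⟩ := Function.ne_iff.mp ha
  refine lt_of_lt_of_le (mul_self_pos.mpr hi) ?_
  have h0 := mul_self_nonneg (a 0)
  have h1 := mul_self_nonneg (a 1)
  have h2 := mul_self_nonneg (a 2)
  have h3 := mul_self_nonneg (a 3)
  unfold dotFour
  fin_cases i <;> dsimp only [Fin.zero_eta, Fin.mk_one, Fin.reduceFinMk] <;> linarith

theorem hasFDerivAt_detFour {E : Type*} [NormedAddCommGroup E] [NormedSpace ℝ E]
    {a b c d : E → Fin 4 → ℝ} {a' b' c' d' : E →L[ℝ] (Fin 4 → ℝ)} {s : E}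
    (ha : HasFDerivAt a a' s) (hb : HasFDerivAt b b' s) (hc : HasFDerivAt c c' s)
    (hd : HasFDerivAt d d' s) :
    ∃ L : E →L[ℝ] ℝ, HasFDerivAt (fun s => detFour (a s) (b s) (c s) (d s)) L s ∧
      ∀ v, L v = detFour (a' v) (b s) (c s) (d s) + detFour (a s) (b' v) (c s) (d s) +
        detFour (a s) (b s) (c' v) (d s) + detFour (a s) (b s) (c s) (d' v) := by
  have h : ∀ i, HasFDerivAt ((![a, b, c, d] : Fin 4 → E → Fin 4 → ℝ) i)
      ((![a', b', c', d'] : Fin 4 → E →L[ℝ] (Fin 4 → ℝ)) i) s := by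
    intro i; fin_cases i <;> assumption
  have e : ∀ s, (fun i => (![a, b, c, d] : Fin 4 → E → Fin 4 → ℝ) i s)
      = ![a s, b s, c s, d s] := by
    intro s; funext i; fin_cases i <;> rfl
  have := HasFDerivAt.multilinear_comp detMultilinear h
  simp only [e] at this
  refine ⟨_, this, fun v => ?_⟩
  rw [Fin.sum_univ_four]
  change detMultilinear (Function.update ![a s, b s, c s, d s] 0 (a' v)) +
    detMultilinear (Function.update ![a s, b s, c s, d s] 1 (b' v)) +
    detMultilinear (Function.update ![a s, b s, c s, d s] 2 (c' v)) +
    detMultilinear (Function.update ![a s, b s, c s, d s] 3 (d' v)) = _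
  have e0 : ∀ w, Function.update ![a s, b s, c s, d s] 0 w = ![w, b s, c s, d s] := by
    intro w; funext i; fin_cases i <;> simp
  have e1 : ∀ w, Function.update ![a s, b s, c s, d s] 1 w = ![a s, w, c s, d s] := by
    intro w; funext i; fin_cases i <;> simp
  have e2 : ∀ w, Function.update ![a s, b s, c s, d s] 2 w = ![a s, b s, w, d s] := by
    intro w; funext i; fin_cases i <;> simp
  have e3 : ∀ w, Function.update ![a s, b s, c s, d s] 3 w = ![a s, b s, c s, w] := by
    intro w; funext i; fin_cases i <;> simp
  rw [e0, e1, e2, e3]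
  rfl

theorem hasFDerivAt_dotFour_self {E : Type*} [NormedAddCommGroup E] [NormedSpace ℝ E]
    {a : E → Fin 4 → ℝ} {a' : E →L[ℝ] (Fin 4 → ℝ)} {s : E} (ha : HasFDerivAt a a' s) :
    ∃ L : E →L[ℝ] ℝ, HasFDerivAt (fun s => dotFour (a s) (a s)) L s ∧
      ∀ v, L v = 2 * dotFour (a s) (a' v) := by
  have h := hasFDerivAt_pi'.mp ha
  refine ⟨_, ((((h 0).mul (h 0)).add ((h 1).mul (h 1))).add ((h 2).mul (h 2))).add
    ((h 3).mul (h 3)), fun v => ?_⟩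
  simp [dotFour]
  ring

/-- The pull-back of the solid angle form, evaluated on three vectors. -/
noncomputable def solidAngle (a b c d : Fin 4 → ℝ) : ℝ := detFour a b c d / dotFour a a ^ 2

theorem hasFDerivAt_solidAngle {E : Type*} [NormedAddCommGroup E] [NormedSpace ℝ E]
    {a b c d : E → Fin 4 → ℝ} {a' b' c' d' : E →L[ℝ] (Fin 4 → ℝ)} {s : E}
    (ha : HasFDerivAt a a' s) (hb : HasFDerivAt b b' s) (hc : HasFDerivAt c c' s)
    (hd : HasFDerivAt d d' s) (h0 : a s ≠ 0) :
    ∃ L : E →L[ℝ] ℝ, HasFDerivAt (fun s => solidAngle (a s) (b s) (c s) (d s)) L s ∧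
      ∀ v, L v = (detFour (a' v) (b s) (c s) (d s) + detFour (a s) (b' v) (c s) (d s) +
        detFour (a s) (b s) (c' v) (d s) + detFour (a s) (b s) (c s) (d' v)) /
          dotFour (a s) (a s) ^ 2 -
        4 * dotFour (a s) (a' v) * detFour (a s) (b s) (c s) (d s) /
          dotFour (a s) (a s) ^ 3 := by
  obtain ⟨L, hL, hL'⟩ := hasFDerivAt_detFour ha hb hc hd
  obtain ⟨M, hM, hM'⟩ := hasFDerivAt_dotFour_self ha
  have hr := (dotFour_self_pos h0).ne'
  refine ⟨_, hL.mul ((hasDerivAt_inv (pow_ne_zero 2 hr)).comp_hasFDerivAt s (hM.pow 2)),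
    fun v => ?_⟩
  simp [hL', hM']
  field_simp
  ring

theorem detFour_swap_left (a b c d : Fin 4 → ℝ) : detFour b a c d = -detFour a b c d := by
  simp only [detFour_eq]; ring

theorem detFour_swap_mid (a b c d : Fin 4 → ℝ) : detFour a c b d = -detFour a b c d := by
  simp only [detFour_eq]; ring

theorem detFour_swap_right (a b c d : Fin 4 → ℝ) : detFour a b d c = -detFour a b c d := by
  simp only [detFour_eq]; ring

theorem detFour_mul_dotFour (f a b c d : Fin 4 → ℝ) :
    detFour a b c d * dotFour f f =
      dotFour f a * detFour f b c d - dotFour f b * detFour f a c d +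
        dotFour f c * detFour f a b d - dotFour f d * detFour f a b c := by
  simp only [detFour_eq, dotFour]; ring

/-- The partial derivatives of a map to `ℝ⁴`. -/
noncomputable def partialDeriv {n : ℕ} (F : (Fin n → ℝ) → Fin 4 → ℝ) (j : Fin n) (s : Fin n → ℝ) :
    Fin 4 → ℝ :=
  fderiv ℝ F s (Pi.single j 1)

theorem hasFDerivAt_partialDeriv {n : ℕ} {F : (Fin n → ℝ) → Fin 4 → ℝ} (hF : ContDiff ℝ 2 F)
    (j : Fin n) (s : Fin n → ℝ) : HasFDerivAt (partialDeriv F j)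
      ((fderiv ℝ (fderiv ℝ F) s).flip (Pi.single j 1)) s := by
  have h : DifferentiableAt ℝ (fderiv ℝ F) s :=
    ((hF.fderiv_right (m := 1) (by norm_num)).differentiable (by norm_num)) s
  have := h.hasFDerivAt.clm_apply (hasFDerivAt_const (Pi.single j (1 : ℝ)) s)
  refine this.congr_fderiv ?_
  ext; simp

theorem continuous_partialDeriv {n : ℕ} {F : (Fin n → ℝ) → Fin 4 → ℝ} (hF : ContDiff ℝ 2 F)
    (j : Fin n) : Continuous (partialDeriv F j) :=
  (hF.continuous_fderiv (by norm_num)).clm_apply continuous_const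

theorem continuousOn_solidAngle {X : Type*} [TopologicalSpace X] {a b c d : X → Fin 4 → ℝ}
    (ha : Continuous a) (hb : Continuous b) (hc : Continuous c) (hd : Continuous d) {S : Set X}
    (h0 : ∀ x ∈ S, a x ≠ 0) : ContinuousOn (fun x => solidAngle (a x) (b x) (c x) (d x)) S := by
  unfold solidAngle
  simp only [detFour_eq]
  refine ContinuousOn.div (by fun_prop) ?_ fun x hx => pow_ne_zero 2 (dotFour_self_pos (h0 x hx)).ne'
  unfold dotFour
  fun_prop

/-- The vector field dual to the pull-back of the solid angle form. -/
noncomputable def flux (F : (Fin 4 → ℝ) → Fin 4 → ℝ) (i : Fin 4) (s : Fin 4 → ℝ) : ℝ :=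
  ![solidAngle (F s) (partialDeriv F 1 s) (partialDeriv F 2 s) (partialDeriv F 3 s),
    -solidAngle (F s) (partialDeriv F 0 s) (partialDeriv F 2 s) (partialDeriv F 3 s),
    solidAngle (F s) (partialDeriv F 0 s) (partialDeriv F 1 s) (partialDeriv F 3 s),
    -solidAngle (F s) (partialDeriv F 0 s) (partialDeriv F 1 s) (partialDeriv F 2 s)] i

theorem flux_divergence {F : (Fin 4 → ℝ) → Fin 4 → ℝ} (hF : ContDiff ℝ 2 F) {s : Fin 4 → ℝ}
    (hs : F s ≠ 0) : (∀ i, DifferentiableAt ℝ (flux F i) s) ∧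
      ∑ i, fderiv ℝ (flux F i) s (Pi.single i 1) = 0 := by
  have h := (hF.differentiable (by norm_num) s).hasFDerivAt
  have hP := fun j => hasFDerivAt_partialDeriv hF j s
  obtain ⟨L0, h0, e0⟩ := hasFDerivAt_solidAngle h (hP 1) (hP 2) (hP 3) hs
  obtain ⟨L1, h1, e1⟩ := hasFDerivAt_solidAngle h (hP 0) (hP 2) (hP 3) hs
  obtain ⟨L2, h2, e2⟩ := hasFDerivAt_solidAngle h (hP 0) (hP 1) (hP 3) hs
  obtain ⟨L3, h3, e3⟩ := hasFDerivAt_solidAngle h (hP 0) (hP 1) (hP 2) hs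
  have k0 : HasFDerivAt (flux F 0) L0 s := h0
  have k1 : HasFDerivAt (flux F 1) (-L1) s := h1.neg
  have k2 : HasFDerivAt (flux F 2) L2 s := h2
  have k3 : HasFDerivAt (flux F 3) (-L3) s := h3.neg
  constructor
  · intro i
    fin_cases i
    exacts [k0.differentiableAt, k1.differentiableAt, k2.differentiableAt, k3.differentiableAt]
  rw [Fin.sum_univ_four, k0.fderiv, k1.fderiv, k2.fderiv, k3.fderiv]
  simp only [neg_apply, e0, e1, e2, e3, ContinuousLinearMap.flip_apply]
  have hsym : IsSymmSndFDerivAt ℝ F s := hF.contDiffAt.isSymmSndFDerivAt (by simp)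
  have hr := dotFour_self_pos hs
  have hd := detFour_mul_dotFour (F s) (partialDeriv F 0 s) (partialDeriv F 1 s)
    (partialDeriv F 2 s) (partialDeriv F 3 s)
  simp only [show ∀ j, fderiv ℝ F s (Pi.single j 1) = partialDeriv F j s from fun _ => rfl]
  rw [hsym.eq (Pi.single 1 1) (Pi.single 0 1), hsym.eq (Pi.single 2 1) (Pi.single 0 1),
    hsym.eq (Pi.single 3 1) (Pi.single 0 1), hsym.eq (Pi.single 2 1) (Pi.single 1 1),
    hsym.eq (Pi.single 3 1) (Pi.single 1 1), hsym.eq (Pi.single 3 1) (Pi.single 2 1)]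
  set H := fderiv ℝ (fderiv ℝ F) s
  generalize H (Pi.single 0 1) (Pi.single 1 1) = H01
  generalize H (Pi.single 0 1) (Pi.single 2 1) = H02
  generalize H (Pi.single 0 1) (Pi.single 3 1) = H03
  generalize H (Pi.single 1 1) (Pi.single 2 1) = H12
  generalize H (Pi.single 1 1) (Pi.single 3 1) = H13
  generalize H (Pi.single 2 1) (Pi.single 3 1) = H23
  generalize partialDeriv F 0 s = P0 at *
  generalize partialDeriv F 1 s = P1 at *
  generalize partialDeriv F 2 s = P2 at *
  generalize partialDeriv F 3 s = P3 at *
  generalize F s = f at *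
  have s1 : detFour P1 P0 P2 P3 = -detFour P0 P1 P2 P3 := detFour_swap_left ..
  have s2 : detFour P2 P0 P1 P3 = detFour P0 P1 P2 P3 := by
    rw [detFour_swap_left, detFour_swap_mid, neg_neg]
  have s3 : detFour P3 P0 P1 P2 = -detFour P0 P1 P2 P3 := by
    rw [detFour_swap_left, detFour_swap_mid, detFour_swap_right, neg_neg]
  have s4 : detFour f P1 H02 P3 = -detFour f H02 P1 P3 := detFour_swap_mid ..
  have s5 : detFour f P1 P2 H03 = detFour f H03 P1 P2 := by
    rw [detFour_swap_right, detFour_swap_mid, neg_neg]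
  have s6 : detFour f P0 P2 H13 = -detFour f P0 H13 P2 := detFour_swap_right ..
  rw [s1, s2, s3, s4, s5, s6, eq_div_of_mul_eq hr.ne' hd]
  field_simp
  ring

/-- The integrand computing the degree of a map to `ℝ⁴ ∖ 0`. -/
noncomputable def degreeIntegrand (f : (Fin 3 → ℝ) → Fin 4 → ℝ) (x : Fin 3 → ℝ) : ℝ :=
  solidAngle (f x) (partialDeriv f 0 x) (partialDeriv f 1 x) (partialDeriv f 2 x)

/-- The unnormalized degree of a map to `ℝ⁴ ∖ 0`. -/
noncomputable def degreeIntegral (f : (Fin 3 → ℝ) → Fin 4 → ℝ) : ℝ :=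
  ∫ x in Set.Icc (0 : Fin 3 → ℝ) 1, degreeIntegrand f x

/-- The projection forgetting the first coordinate. -/
noncomputable def tailL : (Fin 4 → ℝ) →L[ℝ] (Fin 3 → ℝ) :=
  ContinuousLinearMap.pi fun i => ContinuousLinearMap.proj i.succ

/-- The straight-line homotopy. -/
noncomputable def lineHomotopy (f g : (Fin 3 → ℝ) → Fin 4 → ℝ) (s : Fin 4 → ℝ) : Fin 4 → ℝ :=
  (1 - s 0) • f (tailL s) + s 0 • g (tailL s)

theorem contDiff_lineHomotopy {f g : (Fin 3 → ℝ) → Fin 4 → ℝ} (hf : ContDiff ℝ 2 f)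
    (hg : ContDiff ℝ 2 g) : ContDiff ℝ 2 (lineHomotopy f g) := by
  have h0 : ContDiff ℝ 2 fun s : Fin 4 → ℝ => s 0 := contDiff_apply ℝ ℝ 0
  exact ((contDiff_const.sub h0).smul (hf.comp tailL.contDiff)).add
    (h0.smul (hg.comp tailL.contDiff))

theorem fderiv_lineHomotopy {f g : (Fin 3 → ℝ) → Fin 4 → ℝ} (hf : ContDiff ℝ 2 f)
    (hg : ContDiff ℝ 2 g) (s v : Fin 4 → ℝ) : fderiv ℝ (lineHomotopy f g) s v =
      v 0 • (g (tailL s) - f (tailL s)) + (1 - s 0) • fderiv ℝ f (tailL s) (tailL v) +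
        s 0 • fderiv ℝ g (tailL s) (tailL v) := by
  have h0 : HasFDerivAt (fun s : Fin 4 → ℝ => s 0) (ContinuousLinearMap.proj 0) s :=
    (ContinuousLinearMap.proj (R := ℝ) (φ := fun _ : Fin 4 => ℝ) 0).hasFDerivAt
  have hf' := (hf.differentiable (by norm_num) (tailL s)).hasFDerivAt.comp s tailL.hasFDerivAt
  have hg' := (hg.differentiable (by norm_num) (tailL s)).hasFDerivAt.comp s tailL.hasFDerivAt
  have h : HasFDerivAt (lineHomotopy f g) _ s :=
    (((hasFDerivAt_const (1 : ℝ) s).sub h0).smul hf').add (h0.smul hg')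
  rw [h.fderiv]
  simp
  module

theorem partialDeriv_lineHomotopy_zero {f g : (Fin 3 → ℝ) → Fin 4 → ℝ} (hf : ContDiff ℝ 2 f)
    (hg : ContDiff ℝ 2 g) (s : Fin 4 → ℝ) :
    partialDeriv (lineHomotopy f g) 0 s = g (tailL s) - f (tailL s) := by
  have : tailL (Pi.single 0 1) = 0 := by ext i; simp [tailL]
  simp [partialDeriv, fderiv_lineHomotopy hf hg, this]

theorem partialDeriv_lineHomotopy_succ {f g : (Fin 3 → ℝ) → Fin 4 → ℝ} (hf : ContDiff ℝ 2 f)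
    (hg : ContDiff ℝ 2 g) (j : Fin 3) (s : Fin 4 → ℝ) :
    partialDeriv (lineHomotopy f g) j.succ s =
      (1 - s 0) • partialDeriv f j (tailL s) + s 0 • partialDeriv g j (tailL s) := by
  have : tailL (Pi.single j.succ 1) = Pi.single j 1 := by
    ext i; simp [tailL, Pi.single_apply]
  have h2 : (Pi.single j.succ 1 : Fin 4 → ℝ) 0 = 0 := by simp
  simp only [partialDeriv, fderiv_lineHomotopy hf hg, this, h2, zero_smul, zero_add]

theorem tailL_insertNth_zero (t : ℝ) (x : Fin 3 → ℝ) :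
    tailL ((0 : Fin 4).insertNth t x : Fin 4 → ℝ) = x := by
  ext i; simp [tailL]

theorem tailL_insertNth_succ (j : Fin 3) (t : ℝ) (x : Fin 3 → ℝ) :
    tailL (j.succ.insertNth t x : Fin 4 → ℝ) j = t := by
  simp [tailL]

theorem solidAngle_zero (a c d : Fin 4 → ℝ) : solidAngle a 0 c d = 0 := by
  simp [solidAngle, detFour_eq]

theorem flux_succ_eq_zero {F : (Fin 4 → ℝ) → Fin 4 → ℝ} {s : Fin 4 → ℝ}
    (hP : partialDeriv F 0 s = 0) (j : Fin 3) : flux F j.succ s = 0 := by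
  fin_cases j <;> simp [flux, hP, solidAngle_zero]

theorem degreeIntegral_eq_of_segment {f g : (Fin 3 → ℝ) → Fin 4 → ℝ} (hf : ContDiff ℝ 2 f)
    (hg : ContDiff ℝ 2 g) (heq : ∀ x ∉ openCube, f x = g x)
    (hne : ∀ t ∈ Set.Icc (0 : ℝ) 1, ∀ x, (1 - t) • f x + t • g x ≠ 0) :
    degreeIntegral f = degreeIntegral g := by
  set F := lineHomotopy f g with hFdef
  have hF : ContDiff ℝ 2 F := contDiff_lineHomotopy hf hg
  have hF0 : ∀ s ∈ Set.Icc (0 : Fin 4 → ℝ) 1, F s ≠ 0 := fun s hs =>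
    hne (s 0) ⟨hs.1 0, hs.2 0⟩ _
  have hdiv : ∀ s ∈ Set.Icc (0 : Fin 4 → ℝ) 1,
      ∑ i, fderiv ℝ (flux F i) s (Pi.single i 1) = 0 := fun s hs =>
    (flux_divergence hF (hF0 s hs)).2
  have hmain := MeasureTheory.integral_divergence_of_hasFDerivAt_off_countable' (n := 3)
    (0 : Fin 4 → ℝ) 1 (fun _ => zero_le_one) (fun i => flux F i) (fun i => fderiv ℝ (flux F i))
    ∅ Set.countable_empty ?_ ?_ ?_
  rotate_left
  · intro i
    have hc := hF.continuous
    have hp := fun j => continuous_partialDeriv hF j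
    fin_cases i
    exacts [continuousOn_solidAngle hc (hp 1) (hp 2) (hp 3) hF0,
      (continuousOn_solidAngle hc (hp 0) (hp 2) (hp 3) hF0).neg,
      continuousOn_solidAngle hc (hp 0) (hp 1) (hp 3) hF0,
      (continuousOn_solidAngle hc (hp 0) (hp 1) (hp 2) hF0).neg]
  · intro s hs i
    refine ((flux_divergence hF (hF0 s ?_)).1 i).hasFDerivAt
    exact ⟨fun j => (hs.1 j trivial).1.le, fun j => (hs.1 j trivial).2.le⟩
  · exact (MeasureTheory.integrableOn_congr_fun hdiv measurableSet_Icc).mpr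
      MeasureTheory.integrableOn_zero
  have side : ∀ j : Fin 3, ∀ t : ℝ, (t = 0 ∨ t = 1) → ∀ x : Fin 3 → ℝ,
      flux F j.succ (j.succ.insertNth t x) = 0 := by
    intro j t ht x
    have hx : tailL (j.succ.insertNth t x : Fin 4 → ℝ) ∉ openCube := by
      intro h
      have := h j
      rw [tailL_insertNth_succ] at this
      rcases ht with rfl | rfl <;> simp at this
    have hP : partialDeriv F 0 (j.succ.insertNth t x : Fin 4 → ℝ) = 0 := by
      rw [hFdef, partialDeriv_lineHomotopy_zero hf hg, heq _ hx, sub_self]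
    exact flux_succ_eq_zero hP j
  have face : ∀ t x, flux F 0 ((0 : Fin 4).insertNth t x) =
      solidAngle ((1 - t) • f x + t • g x)
        ((1 - t) • partialDeriv f 0 x + t • partialDeriv g 0 x)
        ((1 - t) • partialDeriv f 1 x + t • partialDeriv g 1 x)
        ((1 - t) • partialDeriv f 2 x + t • partialDeriv g 2 x) := by
    intro t x
    have h := fun j : Fin 3 => partialDeriv_lineHomotopy_succ hf hg j
      ((0 : Fin 4).insertNth t x : Fin 4 → ℝ)
    simp only [tailL_insertNth_zero, Fin.insertNth_apply_same] at h
    rw [← h 0, ← h 1, ← h 2]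
    have h' : F ((0 : Fin 4).insertNth t x : Fin 4 → ℝ) = (1 - t) • f x + t • g x := by
      rw [hFdef, lineHomotopy, tailL_insertNth_zero, Fin.insertNth_apply_same]
    rw [← h']
    rfl
  have front : ∀ x, flux F 0 ((0 : Fin 4).insertNth 1 x) = degreeIntegrand g x := by
    intro x; rw [face]; simp [degreeIntegrand]
  have back : ∀ x, flux F 0 ((0 : Fin 4).insertNth 0 x) = degreeIntegrand f x := by
    intro x; rw [face]; simp [degreeIntegrand]
  rw [MeasureTheory.setIntegral_congr_fun measurableSet_Icc hdiv, Fin.sum_univ_succ] at hmain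
  simp only [Pi.one_apply, Pi.zero_apply, front, back, side _ 0 (Or.inl rfl),
    side _ 1 (Or.inr rfl), MeasureTheory.integral_zero, sub_self, Finset.sum_const_zero,
    add_zero] at hmain
  exact (sub_eq_zero.mp hmain.symm).symm

/-- The coordinates of a quaternion, as a continuous linear map to `Fin 4 → ℝ`. -/
noncomputable def tupleL : ℍ[ℝ] →L[ℝ] (Fin 4 → ℝ) :=
  LinearMap.toContinuousLinearMap ⟨⟨fun q => ![q.re, q.imI, q.imJ, q.imK], fun _ _ => by simp⟩,
    fun _ _ => by simp⟩

theorem tupleL_ne_zero {q} (h : q ≠ 0) : tupleL q ≠ 0 := fun h0 =>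
  h (QuaternionAlgebra.ext (congrFun h0 0) (congrFun h0 1) (congrFun h0 2) (congrFun h0 3))

theorem degreeIntegrand_congr {f g : (Fin 3 → ℝ) → Fin 4 → ℝ} {x} (h : f =ᶠ[𝓝 x] g) :
    degreeIntegrand f x = degreeIntegrand g x := by
  simp only [degreeIntegrand, partialDeriv, h.fderiv_eq, h.eq_of_nhds]

theorem degreeIntegrand_const (c : Fin 4 → ℝ) (x) : degreeIntegrand (fun _ => c) x = 0 := by
  simp [degreeIntegrand, partialDeriv, solidAngle_zero]

theorem integrableOn_degreeIntegrand {f : (Fin 3 → ℝ) → Fin 4 → ℝ} (hf : ContDiff ℝ 2 f)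
    (h0 : ∀ x, f x ≠ 0) :
    MeasureTheory.IntegrableOn (degreeIntegrand f) (Set.Icc (0 : Fin 3 → ℝ) 1) :=
  (continuousOn_solidAngle hf.continuous (continuous_partialDeriv hf _)
    (continuous_partialDeriv hf _) (continuous_partialDeriv hf _) fun x _ => h0 x)
      |>.integrableOn_compact isCompact_Icc

namespace QLoop

/-- The degree integral of a loop; meaningful when the loop is twice differentiable. -/
noncomputable def smoothDegree (f : QLoop) : ℝ := degreeIntegral fun x => tupleL (f x)

theorem contDiff_tuple {f : QLoop} (hf : ContDiff ℝ 2 f) : ContDiff ℝ 2 fun x => tupleL (f x) :=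
  tupleL.contDiff.comp hf

theorem smoothDegree_eq_of_segment {f g : QLoop} (hf : ContDiff ℝ 2 f) (hg : ContDiff ℝ 2 g)
    (h : ∀ t ∈ Set.Icc (0 : ℝ) 1, ∀ x, (1 - t) • f x + t • g x ≠ 0) :
    smoothDegree f = smoothDegree g := by
  refine degreeIntegral_eq_of_segment (contDiff_tuple hf) (contDiff_tuple hg)
    (fun x hx => by rw [f.eq_one hx, g.eq_one hx]) fun t ht x => ?_
  rw [← map_smul, ← map_smul, ← map_add]
  exact tupleL_ne_zero (h t ht x)

/-- A positive lower bound for the norm of a loop. -/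
noncomputable def normBound (f : QLoop) : ℝ := f.exists_norm_lower.choose

theorem normBound_pos (f : QLoop) : 0 < normBound f := f.exists_norm_lower.choose_spec.1

theorem normBound_le (f : QLoop) (x) : normBound f ≤ ‖f x‖ := f.exists_norm_lower.choose_spec.2 x

theorem smoothDegree_eq_of_close (f : QLoop) {g h : QLoop} (hg : ContDiff ℝ 2 g)
    (hh : ContDiff ℝ 2 h) (hgf : ∀ x, ‖g x - f x‖ < normBound f)
    (hhf : ∀ x, ‖h x - f x‖ < normBound f) : smoothDegree g = smoothDegree h := by
  refine smoothDegree_eq_of_segment hg hh fun t ht x h0 => ?_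
  have e : f x = -((1 - t) • (g x - f x) + t • (h x - f x)) := by
    rw [← sub_eq_zero, ← h0]; module
  have h1 : ‖f x‖ ≤ (1 - t) * ‖g x - f x‖ + t * ‖h x - f x‖ := by
    conv_lhs => rw [e, norm_neg]
    refine (norm_add_le _ _).trans_eq ?_
    rw [norm_smul, norm_smul, Real.norm_of_nonneg ht.1, Real.norm_of_nonneg (by linarith [ht.2])]
  have h2 : (1 - t) * ‖g x - f x‖ + t * ‖h x - f x‖ < normBound f := by
    have ht1 := ht.1
    have ht2 := ht.2
    rcases eq_or_lt_of_le ht1 with rfl | hpos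
    · simpa using hgf x
    · nlinarith [hgf x, hhf x, mul_pos hpos (sub_pos.mpr (hhf x)),
        mul_nonneg (sub_nonneg.mpr ht2) (sub_pos.mpr (hgf x)).le]
  linarith [f.normBound_le x]

/-- The degree of a loop. -/
noncomputable def degree (f : QLoop) : ℝ :=
  smoothDegree (f.exists_smooth_approx f.normBound_pos).choose

theorem degree_eq_of_close (f : QLoop) {g : QLoop} (hg : ContDiff ℝ 2 g)
    (hgf : ∀ x, ‖g x - f x‖ < normBound f) : degree f = smoothDegree g :=
  have h := (f.exists_smooth_approx f.normBound_pos).choose_spec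
  smoothDegree_eq_of_close f h.1 hg h.2 hgf

theorem degree_of_contDiff {f : QLoop} (hf : ContDiff ℝ 2 f) : degree f = smoothDegree f :=
  degree_eq_of_close f hf fun x => by simpa using f.normBound_pos

theorem degree_congr {f g : QLoop} (h : cls f = cls g) : degree f = degree g := by
  refine eq_of_cls_eq (fun f => ⟨normBound f / 2, half_pos f.normBound_pos, fun g hg => ?_⟩) h
  obtain ⟨k, hk, hkg⟩ := g.exists_smooth_approx
    (lt_min g.normBound_pos (half_pos f.normBound_pos))
  rw [degree_eq_of_close g hk fun x => (hkg x).trans_le (min_le_left _ _),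
    degree_eq_of_close f hk fun x => ?_]
  have h1 := (hkg x).trans_le (min_le_right _ _)
  have h2 := hg x
  have h3 := norm_sub_le_norm_sub_add_norm_sub (k x) (g x) (f x)
  linarith

theorem exists_smooth_cls_eq (f : QLoop) : ∃ g : QLoop, ContDiff ℝ 2 g ∧ cls f = cls g := by
  obtain ⟨g, hg, h⟩ := f.exists_smooth_approx f.normBound_pos
  exact ⟨g, hg, cls_eq_of_close fun x => (h x).trans_le (f.normBound_le x)⟩

theorem contDiff_rescale {a b : ℝ} (hb : b ≤ 0) (ha : 1 ≤ a + b) {f : QLoop}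
    (hf : ContDiff ℝ 2 f) : ContDiff ℝ 2 (rescale a b hb ha f) := by
  refine hf.comp (contDiff_pi.mpr fun i => ?_)
  have := fun i => contDiff_apply (n := 2) ℝ ℝ (i : Fin 3)
  rcases eq_or_ne i 0 with rfl | hi
  · simpa [stretch] using (contDiff_const.mul (this 0)).add contDiff_const
  · simpa [stretch, hi] using this i

theorem contDiff_mul {f g : QLoop} (hf : ContDiff ℝ 2 f) (hg : ContDiff ℝ 2 g) :
    ContDiff ℝ 2 (f * g : QLoop) := hf.mul hg

theorem firstHalf_eq_one (f : QLoop) {x : Fin 3 → ℝ} (hx : 1 / 2 ≤ x 0) : firstHalf f x = 1 :=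
  f.eq_one fun h => by
    have := (h 0).2
    simp [stretch] at this
    linarith

theorem secondHalf_eq_one (f : QLoop) {x : Fin 3 → ℝ} (hx : x 0 ≤ 1 / 2) : secondHalf f x = 1 :=
  f.eq_one fun h => by
    have := (h 0).1
    simp [stretch] at this
    linarith

theorem smoothDegree_mul_halves {f g : QLoop} (hf : ContDiff ℝ 2 f) (hg : ContDiff ℝ 2 g) :
    smoothDegree (firstHalf f * secondHalf g) =
      smoothDegree (firstHalf f) + smoothDegree (secondHalf g) := by
  have hf' : ContDiff ℝ 2 (firstHalf f) := contDiff_rescale _ _ hf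
  have hg' : ContDiff ℝ 2 (secondHalf g) := contDiff_rescale _ _ hg
  unfold smoothDegree degreeIntegral
  rw [← MeasureTheory.integral_add
    (integrableOn_degreeIntegrand (contDiff_tuple hf') fun x => tupleL_ne_zero (ne_zero _ x))
    (integrableOn_degreeIntegrand (contDiff_tuple hg') fun x => tupleL_ne_zero (ne_zero _ x))]
  refine MeasureTheory.integral_congr_ae (MeasureTheory.ae_restrict_of_ae ?_)
  have hae : ∀ᵐ x : Fin 3 → ℝ, x 0 ≠ 1 / 2 :=
    MeasureTheory.Measure.ae_eval_ne (fun _ => MeasureTheory.volume) 0 (1 / 2)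
  filter_upwards [hae] with x hx
  rcases lt_or_gt_of_ne hx with hx | hx
  · have hU : ∀ᶠ y : Fin 3 → ℝ in 𝓝 x, y 0 < 1 / 2 :=
      (isOpen_lt (continuous_apply 0) continuous_const).mem_nhds hx
    rw [degreeIntegrand_congr (g := fun x => tupleL (firstHalf f x))
        (hU.mono fun y hy => by simp only [mul_apply]; rw [secondHalf_eq_one g hy.le, mul_one]),
      degreeIntegrand_congr (f := fun x => tupleL (secondHalf g x)) (g := fun _ => tupleL 1)
        (hU.mono fun y hy => by simp only; rw [secondHalf_eq_one g hy.le]),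
      degreeIntegrand_const, add_zero]
  · have hU : ∀ᶠ y : Fin 3 → ℝ in 𝓝 x, 1 / 2 < y 0 :=
      (isOpen_lt continuous_const (continuous_apply 0)).mem_nhds hx
    rw [degreeIntegrand_congr (g := fun x => tupleL (secondHalf g x))
        (hU.mono fun y hy => by simp only [mul_apply]; rw [firstHalf_eq_one f hy.le, one_mul]),
      degreeIntegrand_congr (f := fun x => tupleL (firstHalf f x)) (g := fun _ => tupleL 1)
        (hU.mono fun y hy => by simp only; rw [firstHalf_eq_one f hy.le]),
      degreeIntegrand_const, zero_add]

theorem degree_mul (f g : QLoop) : degree (f * g) = degree f + degree g := by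
  obtain ⟨f', hf', ef⟩ := f.exists_smooth_cls_eq
  obtain ⟨g', hg', eg⟩ := g.exists_smooth_cls_eq
  have hf2 : ContDiff ℝ 2 (firstHalf f') := contDiff_rescale _ _ hf'
  have hg2 : ContDiff ℝ 2 (secondHalf g') := contDiff_rescale _ _ hg'
  have e1 : cls f = cls (firstHalf f') := ef.trans (cls_rescale _ _ _ _ f').symm
  have e2 : cls g = cls (secondHalf g') := eg.trans (cls_rescale _ _ _ _ g').symm
  rw [degree_congr (cls_mul_congr e1 e2), degree_congr e1, degree_congr e2,
    degree_of_contDiff hf2, degree_of_contDiff hg2, degree_of_contDiff (contDiff_mul hf2 hg2),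
    smoothDegree_mul_halves hf' hg']

theorem degree_one : degree 1 = 0 := by
  have := degree_mul 1 1
  rw [one_mul] at this
  linarith

theorem degree_pow (f : QLoop) (n : ℕ) : degree (f ^ n) = n * degree f := by
  induction n with
  | zero => simp [degree_one]
  | succ n ih => rw [pow_succ, degree_mul, ih]; push_cast; ring

theorem cls_pow (f : QLoop) (n : ℕ) : cls (f ^ n) = cls f ^ n := by
  induction n with
  | zero => simpa using cls_one
  | succ n ih => rw [pow_succ, cls_mul, ih, pow_succ]

end QLoop

theorem solidAngle_scale {l : ℝ} (hl : l ≠ 0) (a b c d : Fin 4 → ℝ) (β γ δ : ℝ) :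
    solidAngle (l • a) (l • b + β • a) (l • c + γ • a) (l • d + δ • a) = solidAngle a b c d := by
  have h1 : detFour (l • a) (l • b + β • a) (l • c + γ • a) (l • d + δ • a) =
      l ^ 4 * detFour a b c d := by
    simp only [detFour_eq, Pi.add_apply, Pi.smul_apply, smul_eq_mul]; ring
  have h2 : dotFour (l • a) (l • a) ^ 2 = l ^ 4 * dotFour a a ^ 2 := by
    simp only [dotFour, Pi.smul_apply, smul_eq_mul]; ring
  rw [solidAngle, h1, h2, mul_div_mul_left _ _ (pow_ne_zero 4 hl), solidAngle]

theorem degreeIntegrand_smul {l : (Fin 3 → ℝ) → ℝ} {f : (Fin 3 → ℝ) → Fin 4 → ℝ} {x}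
    (hl : DifferentiableAt ℝ l x) (hf : DifferentiableAt ℝ f x) (h0 : l x ≠ 0) :
    degreeIntegrand (fun x => l x • f x) x = degreeIntegrand f x := by
  have h := (hl.hasFDerivAt.smul hf.hasFDerivAt).fderiv
  have hp : ∀ j, partialDeriv (fun x => l x • f x) j x =
      l x • partialDeriv f j x + fderiv ℝ l x (Pi.single j 1) • f x := by
    intro j
    refine (congrArg (fun L => L (Pi.single j 1)) h).trans ?_
    simp [partialDeriv]
  simp only [degreeIntegrand, hp, solidAngle_scale h0]

theorem contDiff_mkQ {a b c d : (Fin 3 → ℝ) → ℝ} (ha : ContDiff ℝ 2 a) (hb : ContDiff ℝ 2 b)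
    (hc : ContDiff ℝ 2 c) (hd : ContDiff ℝ 2 d) :
    ContDiff ℝ 2 fun x => mkQ (a x) (b x) (c x) (d x) := by
  have : (fun x => mkQ (a x) (b x) (c x) (d x)) = fun x => a x • mkQ 1 0 0 0 + b x • mkQ 0 1 0 0 +
      c x • mkQ 0 0 1 0 + d x • mkQ 0 0 0 1 := by
    funext x; ext <;> simp
  rw [this]
  exact (((ha.smul contDiff_const).add (hb.smul contDiff_const)).add
    (hc.smul contDiff_const)).add (hd.smul contDiff_const)

theorem contDiff_sumSq : ContDiff ℝ 2 sumSq := by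
  unfold sumSq; fun_prop

theorem contDiff_bump (ε : ℝ) : ContDiff ℝ 2 (bump ε) :=
  (Real.smoothTransition.contDiff (n := 2)).comp (contDiff_const.sub (contDiff_sumSq.div_const _))

theorem hasFDerivAt_bump (ε : ℝ) (z : Fin 3 → ℝ) : ∃ k ≤ 0, ∀ j,
    fderiv ℝ (bump ε) z (Pi.single j 1) = k * z j := by
  have hd := (Real.smoothTransition.contDiff (n := 1)).differentiable (by norm_num)
    (1 - sumSq z / ε ^ 2)
  have hnn : 0 ≤ deriv Real.smoothTransition (1 - sumSq z / ε ^ 2) :=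
    Real.smoothTransition.monotone.deriv_nonneg
  refine ⟨-(deriv Real.smoothTransition (1 - sumSq z / ε ^ 2) * (2 / ε ^ 2)), ?_, fun j => ?_⟩
  · have : 0 ≤ 2 / ε ^ 2 := by positivity
    nlinarith [mul_nonneg hnn this]
  have hp : ∀ i : Fin 3, HasFDerivAt (fun z : Fin 3 → ℝ => z i) (ContinuousLinearMap.proj i) z :=
    fun i => (ContinuousLinearMap.proj (R := ℝ) (φ := fun _ : Fin 3 => ℝ) i).hasFDerivAt
  have hS : HasFDerivAt sumSq _ z := (((hp 0).pow 2).add ((hp 1).pow 2)).add ((hp 2).pow 2)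
  have hb := hd.hasDerivAt.comp_hasFDerivAt z ((hS.mul_const (ε ^ 2)⁻¹).const_sub 1)
  have hb' : HasFDerivAt (bump ε) _ z := hb
  rw [hb'.fderiv]
  fin_cases j <;> simp [div_eq_mul_inv] <;> ring

namespace QLoop

/-- The generator without its positive scaling factor, in coordinates. -/
noncomputable def coreTuple (z : Fin 3 → ℝ) : Fin 4 → ℝ := tupleL (core (bump (1 / 2) z) z)

theorem contDiff_core : ContDiff ℝ 2 fun z => core (bump (1 / 2) z) z := by
  have hb := contDiff_bump (1 / 2)
  have hS := contDiff_sumSq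
  have hp := fun i => contDiff_apply (n := 2) ℝ ℝ (i : Fin 3)
  have h2 := (contDiff_const (c := (2 : ℝ))).mul hb
  exact contDiff_mkQ (hS.sub (hb.pow 2)) (h2.mul (hp 0)) (h2.mul (hp 1)) (h2.mul (hp 2))

theorem partialDeriv_coreTuple {z : Fin 3 → ℝ} {k : ℝ}
    (hk : ∀ j, fderiv ℝ (bump (1 / 2)) z (Pi.single j 1) = k * z j) (j : Fin 3) :
    partialDeriv coreTuple j z =
      ![2 * z j - 2 * bump (1 / 2) z * (k * z j),
        2 * (k * z j) * z 0 + 2 * bump (1 / 2) z * (Pi.single j 1 : Fin 3 → ℝ) 0,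
        2 * (k * z j) * z 1 + 2 * bump (1 / 2) z * (Pi.single j 1 : Fin 3 → ℝ) 1,
        2 * (k * z j) * z 2 + 2 * bump (1 / 2) z * (Pi.single j 1 : Fin 3 → ℝ) 2] := by
  have hb := ((contDiff_bump (1 / 2)).differentiable (by norm_num) z).hasFDerivAt
  have hp : ∀ i : Fin 3, HasFDerivAt (fun z : Fin 3 → ℝ => z i) (ContinuousLinearMap.proj i) z :=
    fun i => (ContinuousLinearMap.proj (R := ℝ) (φ := fun _ : Fin 3 => ℝ) i).hasFDerivAt
  have hS : HasFDerivAt sumSq _ z := (((hp 0).pow 2).add ((hp 1).pow 2)).add ((hp 2).pow 2)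
  have h2 := hb.const_mul 2
  have hd : DifferentiableAt ℝ coreTuple z :=
    (tupleL.contDiff.comp contDiff_core).differentiable (by norm_num) z
  have hc := hasFDerivAt_pi'.mp hd.hasFDerivAt
  have c0 : HasFDerivAt (fun z => coreTuple z 0) _ z := hS.sub (hb.pow 2)
  have c1 : HasFDerivAt (fun z => coreTuple z 1) _ z := h2.mul (hp 0)
  have c2 : HasFDerivAt (fun z => coreTuple z 2) _ z := h2.mul (hp 1)
  have c3 : HasFDerivAt (fun z => coreTuple z 3) _ z := h2.mul (hp 2)
  have e0 := congrArg (fun L => L (Pi.single j 1)) ((hc 0).unique c0)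
  have e1 := congrArg (fun L => L (Pi.single j 1)) ((hc 1).unique c1)
  have e2 := congrArg (fun L => L (Pi.single j 1)) ((hc 2).unique c2)
  have e3 := congrArg (fun L => L (Pi.single j 1)) ((hc 3).unique c3)
  simp [hk, -one_div] at e0 e1 e2 e3
  funext i
  fin_cases i
  · refine e0.trans ?_
    fin_cases j <;> simp [-one_div]
  · refine e1.trans ?_
    simp [-one_div]; ring
  · refine e2.trans ?_
    simp [-one_div]; ring
  · refine e3.trans ?_
    simp [-one_div]; ring

theorem degreeIntegrand_coreTuple (z : Fin 3 → ℝ) : ∃ k ≤ 0, degreeIntegrand coreTuple z =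
    -(8 * bump (1 / 2) z ^ 2 * (bump (1 / 2) z - k * sumSq z)) /
      (sumSq z + bump (1 / 2) z ^ 2) ^ 3 := by
  obtain ⟨k, hk0, hk⟩ := hasFDerivAt_bump (1 / 2) z
  refine ⟨k, hk0, ?_⟩
  have hpos : 0 < sumSq z + bump (1 / 2) z ^ 2 := by
    simpa using denom_pos (B := 1) (by simp) (1 / 2) z
  have hcore : coreTuple z = ![sumSq z - bump (1 / 2) z ^ 2, 2 * bump (1 / 2) z * z 0,
    2 * bump (1 / 2) z * z 1, 2 * bump (1 / 2) z * z 2] := rfl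
  rw [degreeIntegrand, partialDeriv_coreTuple hk, partialDeriv_coreTuple hk,
    partialDeriv_coreTuple hk, hcore]
  generalize bump (1 / 2) z = m at *
  have hdot : dotFour ![sumSq z - m ^ 2, 2 * m * z 0, 2 * m * z 1, 2 * m * z 2]
      ![sumSq z - m ^ 2, 2 * m * z 0, 2 * m * z 1, 2 * m * z 2] = (sumSq z + m ^ 2) ^ 2 := by
    simp [dotFour, sumSq]
    ring
  rw [solidAngle, hdot, div_eq_div_iff (by positivity) (by positivity)]
  simp [detFour_eq, sumSq]
  ring

theorem contDiff_scale : ContDiff ℝ 2 fun z : Fin 3 → ℝ => (sumSq z + bump (1 / 2) z ^ 2)⁻¹ :=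
  (contDiff_sumSq.add ((contDiff_bump _).pow 2)).inv fun z => by
    simpa using (denom_pos (B := 1) (by simp) (1 / 2) z).ne'

theorem generator_apply (x : Fin 3 → ℝ) : generator x =
    (sumSq (x - fun _ => 1 / 2) + bump (1 / 2) (x - fun _ => 1 / 2) ^ 2)⁻¹ •
      core (bump (1 / 2) (x - fun _ => 1 / 2)) (x - fun _ => 1 / 2) := by
  rw [generator, gamma_apply, gammaFun, Matrix.one_mulVec]

theorem contDiff_generator : ContDiff ℝ 2 generator := by
  rw [show (generator : (Fin 3 → ℝ) → ℍ[ℝ]) = _ from funext generator_apply]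
  exact (contDiff_scale.smul contDiff_core).comp (contDiff_id.sub contDiff_const)

theorem degreeIntegrand_generator (x : Fin 3 → ℝ) :
    degreeIntegrand (fun x => tupleL (generator x)) x =
      degreeIntegrand coreTuple (x - fun _ => 1 / 2) := by
  have hne : (sumSq (x - fun _ => 1 / 2) + bump (1 / 2) (x - fun _ => 1 / 2) ^ 2)⁻¹ ≠ 0 :=
    inv_ne_zero (by simpa [-one_div] using
      (denom_pos (B := 1) (by simp) (1 / 2) (x - fun _ => 1 / 2)).ne')
  rw [← degreeIntegrand_smul (contDiff_scale.differentiable (by norm_num) _)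
    (f := coreTuple) ((tupleL.contDiff.comp contDiff_core).differentiable (by norm_num) _) hne]
  set G : (Fin 3 → ℝ) → Fin 4 → ℝ := fun z => (sumSq z + bump (1 / 2) z ^ 2)⁻¹ •
    coreTuple z
  have e : (fun x => tupleL (generator x)) = fun x => G (x - fun _ => 1 / 2) := by
    funext x
    rw [generator_apply, map_smul]
    rfl
  rw [e]
  simp only [degreeIntegrand, partialDeriv, fderiv_comp_sub]

theorem degree_generator_ne_zero : degree generator ≠ 0 := by
  rw [degree_of_contDiff contDiff_generator]
  set φ := degreeIntegrand fun x => tupleL (generator x) with hφ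
  have hIntegrable := integrableOn_degreeIntegrand (contDiff_tuple contDiff_generator)
    fun x => tupleL_ne_zero (generator.ne_zero x)
  have hcont : Continuous φ := by
    have h := contDiff_tuple contDiff_generator
    rw [← continuousOn_univ]
    exact continuousOn_solidAngle h.continuous (continuous_partialDeriv h _)
      (continuous_partialDeriv h _) (continuous_partialDeriv h _)
      fun x _ => tupleL_ne_zero (generator.ne_zero x)
  have hnn : ∀ x, 0 ≤ -φ x := by
    intro x
    obtain ⟨k, hk, e⟩ := degreeIntegrand_coreTuple (x - fun _ => 1 / 2)
    rw [hφ, degreeIntegrand_generator, e, neg_div, neg_neg]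
    have h1 := bump_nonneg (1 / 2) (x - fun _ => 1 / 2)
    have h2 := sumSq_nonneg (x - fun _ => 1 / 2)
    have h3 : 0 ≤ -(k * sumSq (x - fun _ => 1 / 2)) := by nlinarith
    have h4 : 0 ≤ bump (1 / 2) (x - fun _ => 1 / 2) - k * sumSq (x - fun _ => 1 / 2) := by linarith
    positivity
  have hcenter : φ (fun _ => 1 / 2) ≠ 0 := by
    obtain ⟨k, -, e⟩ := degreeIntegrand_coreTuple 0
    rw [hφ, degreeIntegrand_generator, show (fun _ : Fin 3 => (1 / 2 : ℝ)) - (fun _ => 1 / 2) = 0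
      from sub_self _, e, bump_zero]
    simp [sumSq]
  have hpos : 0 < ∫ x in Set.Icc (0 : Fin 3 → ℝ) 1, -φ x := by
    rw [MeasureTheory.setIntegral_pos_iff_support_of_nonneg_ae
      (Filter.Eventually.of_forall hnn) hIntegrable.neg]
    refine lt_of_lt_of_le (IsOpen.measure_pos MeasureTheory.volume
      ((hcont.neg.isOpen_support).inter isOpen_openCube) ⟨fun _ => 1 / 2, ?_, ?_⟩)
      (MeasureTheory.measure_mono (Set.inter_subset_inter_right _ ?_))
    · simpa using hcenter
    · intro i; norm_num
    · exact fun x hx => ⟨fun i => (hx i).1.le, fun i => (hx i).2.le⟩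
  rw [MeasureTheory.integral_neg] at hpos
  intro h
  rw [show ∫ x in Set.Icc (0 : Fin 3 → ℝ) 1, φ x = 0 from h] at hpos
  simp at hpos

theorem cls_generator_pow_ne_one {n : ℕ} (hn : 0 < n) : cls generator ^ n ≠ 1 := by
  intro h
  rw [← cls_pow, ← cls_one] at h
  have := degree_congr h
  rw [degree_pow, degree_one] at this
  rcases mul_eq_zero.mp this with h | h
  · exact hn.ne' (by exact_mod_cast h)
  · exact degree_generator_ne_zero h

end QLoop

/-- `π₃` of the nonzero quaternions is infinite cyclic. -/
theorem NonzeroQuaternion.nonempty_piThreeEquiv :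
    Nonempty (π_ 3 NonzeroQuaternion 1 ≃* Multiplicative ℤ) := by
  have : IsCyclic (π_ 3 NonzeroQuaternion 1) := ⟨QLoop.cls QLoop.generator, fun a => by
    obtain ⟨f, rfl⟩ := QLoop.cls_surjective a
    exact QLoop.cls_mem_zpowers f⟩
  have : Infinite (π_ 3 NonzeroQuaternion 1) :=
    not_finite_iff_infinite.mp fun _ => by
      obtain ⟨n, hn, e⟩ := isOfFinOrder_iff_pow_eq_one.mp
        (isOfFinOrder_of_finite (QLoop.cls QLoop.generator))
      exact QLoop.cls_generator_pow_ne_one hn e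
  exact ⟨intCyclicMulEquiv.symm⟩

/-- `π₃(Q̃₂) ≅ ℤ × ℤ`. -/
theorem pi_three_of_QTilde_two (x₀ : QTilde 2) :
    Nonempty (π_ 3 (QTilde 2) x₀ ≃* Multiplicative (ℤ × ℤ)) := by
  obtain ⟨e⟩ := QTilde.nonempty_piThreeEquiv x₀
  obtain ⟨u⟩ := NonzeroQuaternion.nonempty_piThreeEquiv
  exact ⟨(e.trans (u.prodCongr u)).trans (MulEquiv.prodMultiplicative ℤ ℤ).symm⟩
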